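/- For every Borel set A ⊆ (−1,1), the finite Hilbert transform of its characteristic function satisfies ‖T(χ_A)‖_{L^2} ≥ β · |A|^{1/2}, where β := ( ∫_0^∞ 4λ/(e^{πλ}+1) dλ )^{1/2} and |A| denotes the Lebesgue measure of A. -/

import Mathlib

open MeasureTheory Filter Set

/-- Lebesgue measure restricted to the interval (-1,1). -/
noncomputable def volIoo : Measure ℝ := volume.restrict (Ioo (-1:ℝ) 1)

/-- The finite Hilbert transform of `f`, defined at `t` as the principal value
`lim_{ε→0⁺} (1/π)(∫_{-1}^{t-ε} + ∫_{t+ε}^{1}) f(x)/(x−t) dx`. -/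
noncomputable def fht (f : ℝ → ℂ) (t : ℝ) : ℂ :=
  limUnder (nhdsWithin (0:ℝ) (Ioi 0)) (fun ε : ℝ =>
    (Real.pi : ℂ)⁻¹ * ((∫ x in Ioo (-1:ℝ) (t - ε), f x / ((x : ℂ) - (t : ℂ))) +
      ∫ x in Ioo (t + ε) (1:ℝ), f x / ((x : ℂ) - (t : ℂ))))

/-- The constant `β = (∫_0^∞ 4λ/(e^{πλ}+1) dλ)^{1/2}`. -/
noncomputable def fhtBeta : ℝ :=
  Real.sqrt (∫ l in Ioi (0:ℝ), 4 * l / (Real.exp (Real.pi * l) + 1))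

/-!
Let `T` be the Hilbert transform and `F` the Cauchy transform of a bounded real function `φ` with
bounded support, normalised to have boundary values `φ - i T φ` on the real line. Since `F` is
holomorphic on the upper half-plane and `O(1/z)` at infinity, `∫ F ^ 2 = 0` and `∫ F ^ 3 = 0` along
horizontal lines. The first identity, applied to differences of translates of `F`, says that
imaginary parts have the same `L²` norm as real parts, so that `F` converges in `L²` at the boundary
because its real part, the Poisson integral of `φ`, does. The real part of the second one becomes
`∫ φ ^ 3 = 3 ∫ φ (T φ) ^ 2` in the limit. For `φ = χ_A` this is `|A| = 3 ∫_A (T χ_A) ^ 2`, and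
`β ^ 2 = 1 / 3`.
-/

open Topology Asymptotics Bornology
open scoped ENNReal Real

theorem hasSum_neg_one_pow_div_succ_sq :
    HasSum (fun n : ℕ => (-1 : ℝ) ^ n / ((n : ℝ) + 1) ^ 2) (π ^ 2 / 12) := by
  have all : HasSum (fun n : ℕ => 1 / ((n : ℝ) + 1) ^ 2) (π ^ 2 / 6) := by
    simpa using (hasSum_nat_add_iff' (f := fun n : ℕ => 1 / (n : ℝ) ^ 2) 1).2 hasSum_zeta_two
  have odd_term (k : ℕ) :
      1 / (((2 * k + 1 : ℕ) : ℝ) + 1) ^ 2 = 1 / 4 * (1 / ((k : ℝ) + 1) ^ 2) := by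
    push_cast
    field_simp
    ring
  have odd : HasSum (fun k : ℕ => 1 / (((2 * k + 1 : ℕ) : ℝ) + 1) ^ 2) (1 / 4 * (π ^ 2 / 6)) := by
    simpa only [odd_term] using all.mul_left (1 / 4)
  obtain ⟨S, even⟩ : Summable fun k : ℕ => 1 / (((2 * k : ℕ) : ℝ) + 1) ^ 2 :=
    all.summable.comp_injective (mul_right_injective₀ two_ne_zero)
  have hS : S + 1 / 4 * (π ^ 2 / 6) = π ^ 2 / 6 :=
    (HasSum.even_add_odd (f := fun n : ℕ => 1 / ((n : ℝ) + 1) ^ 2) even odd).unique all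
  rw [show π ^ 2 / 12 = S + -(1 / 4 * (π ^ 2 / 6)) by linarith]
  exact HasSum.even_add_odd (by simpa using even) (by simpa [pow_succ, neg_div] using odd.neg)

theorem integral_mul_exp_neg_mul_Ioi {r : ℝ} (hr : 0 < r) :
    ∫ x in Ioi (0 : ℝ), x * Real.exp (-(r * x)) = (r ^ 2)⁻¹ := by
  have gamma := Real.integral_rpow_mul_exp_neg_mul_Ioi two_pos hr
  simpa [show (2 : ℝ) - 1 = 1 by norm_num, Real.Gamma_two] using gamma

theorem integrableOn_mul_exp_neg_mul_Ioi {r : ℝ} (hr : 0 < r) :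
    IntegrableOn (fun x : ℝ => x * Real.exp (-(r * x))) (Ioi 0) :=
  .of_integral_ne_zero (by rw [integral_mul_exp_neg_mul_Ioi hr]; positivity)

theorem hasSum_neg_one_pow_mul_exp_neg {x : ℝ} (hx : 0 < x) :
    HasSum (fun n : ℕ => (-1 : ℝ) ^ n * (x * Real.exp (-(((n : ℝ) + 1) * x))))
      (x / (Real.exp x + 1)) := by
  have geometric := (hasSum_geometric_of_abs_lt_one (r := -Real.exp (-x)) (by
    rw [abs_neg, Real.abs_exp, Real.exp_lt_one_iff]; linarith)).mul_left (x * Real.exp (-x))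
  have term (n : ℕ) : (-1 : ℝ) ^ n * (x * Real.exp (-(((n : ℝ) + 1) * x))) =
      x * Real.exp (-x) * (-Real.exp (-x)) ^ n := by
    rw [show -(((n : ℝ) + 1) * x) = n * -x + -x by ring, Real.exp_add, Real.exp_nat_mul,
      neg_pow (Real.exp _)]
    ring
  have sum : x / (Real.exp x + 1) = x * Real.exp (-x) * (1 - -Real.exp (-x))⁻¹ := by
    rw [Real.exp_neg, sub_neg_eq_add]
    field_simp
  simpa only [term, sum] using geometric

theorem integral_div_exp_add_one : ∫ x in Ioi (0 : ℝ), x / (Real.exp x + 1) = π ^ 2 / 12 := by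
  have pos (n : ℕ) : 0 < (n : ℝ) + 1 := n.cast_add_one_pos
  have norm_term (n : ℕ) :
      ∫ x in Ioi (0 : ℝ), ‖(-1 : ℝ) ^ n * (x * Real.exp (-(((n : ℝ) + 1) * x)))‖ =
        1 / ((n : ℝ) + 1) ^ 2 := by
    rw [one_div, ← integral_mul_exp_neg_mul_Ioi (pos n)]
    refine setIntegral_congr_fun measurableSet_Ioi fun x hx => ?_
    simp [abs_of_pos (mem_Ioi.1 hx)]
  have summable : Summable fun n : ℕ => 1 / ((n : ℝ) + 1) ^ 2 := by
    simpa using (summable_nat_add_iff 1).2 hasSum_zeta_two.summable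
  have termwise := hasSum_integral_of_summable_integral_norm
    (fun n : ℕ => (integrableOn_mul_exp_neg_mul_Ioi (pos n)).const_mul ((-1) ^ n))
    (by simpa only [norm_term] using summable)
  simp only [integral_const_mul, integral_mul_exp_neg_mul_Ioi (pos _), ← div_eq_mul_inv] at termwise
  rw [← termwise.unique hasSum_neg_one_pow_div_succ_sq]
  exact setIntegral_congr_fun measurableSet_Ioi
    fun x hx => (hasSum_neg_one_pow_mul_exp_neg hx).tsum_eq.symm

theorem fhtBeta_eq_sqrt : fhtBeta = √(1 / 3) := by
  have scaled := integral_comp_mul_left_Ioi (fun x : ℝ => x / (Real.exp x + 1)) 0 Real.pi_pos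
  rw [mul_zero, integral_div_exp_add_one, smul_eq_mul] at scaled
  have integrand (l : ℝ) : 4 * l / (Real.exp (π * l) + 1) =
      4 / π * (π * l / (Real.exp (π * l) + 1)) := by
    field_simp
  rw [fhtBeta]
  simp only [integrand, integral_const_mul, scaled]
  congr 1
  field_simp
  norm_num

section HalfPlane

variable {E : Type*} [NormedAddCommGroup E] {f : ℂ → E}

theorem eventually_norm_le_div_sq_of_isBigO
    (hdecay : f =O[cobounded ℂ ⊓ 𝓟 {z | 0 ≤ z.im}] fun z => (z ^ 2)⁻¹) :
    ∃ C, ∀ᶠ R : ℝ in atTop, ∀ z : ℂ, 0 ≤ z.im → R ≤ ‖z‖ → ‖f z‖ ≤ C / R ^ 2 := by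
  obtain ⟨C, hC, bound⟩ := hdecay.exists_pos
  rw [IsBigOWith_def, eventually_inf_principal, ← comap_norm_atTop, eventually_comap] at bound
  obtain ⟨R₀, hR₀⟩ := eventually_atTop.1 bound
  refine ⟨C, ?_⟩
  filter_upwards [eventually_ge_atTop R₀, eventually_gt_atTop 0] with R hR hR_pos z hz hRz
  calc ‖f z‖ ≤ C * ‖(z ^ 2)⁻¹‖ := hR₀ ‖z‖ (hR.trans hRz) z rfl hz
    _ = C / ‖z‖ ^ 2 := by rw [norm_inv, norm_pow, div_eq_mul_inv]
    _ ≤ C / R ^ 2 := by gcongr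

theorem tendsto_ofReal_cobounded_upperHalfPlane :
    Tendsto ((↑) : ℝ → ℂ) (cobounded ℝ) (cobounded ℂ ⊓ 𝓟 {z | 0 ≤ z.im}) :=
  tendsto_inf.2 ⟨Complex.isometry_ofReal.antilipschitz.tendsto_cobounded,
    tendsto_principal.2 (.of_forall fun t => (Complex.ofReal_im t).ge)⟩

variable [NormedSpace ℂ E]

theorem continuousOn_closed_upperHalfPlane (hf : DiffContOnCl ℂ f {z : ℂ | 0 < z.im}) :
    ContinuousOn f {z : ℂ | 0 ≤ z.im} := by
  simpa only [Complex.closure_setOfPred_lt_im] using hf.continuousOn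

theorem continuous_comp_ofReal (hf : DiffContOnCl ℂ f {z : ℂ | 0 < z.im}) :
    Continuous fun t : ℝ => f t :=
  (continuousOn_closed_upperHalfPlane hf).comp_continuous Complex.continuous_ofReal
    fun t => (Complex.ofReal_im t).ge

theorem integrable_comp_ofReal_of_isBigO (hf : DiffContOnCl ℂ f {z : ℂ | 0 < z.im})
    (hdecay : f =O[cobounded ℂ ⊓ 𝓟 {z | 0 ≤ z.im}] fun z => (z ^ 2)⁻¹) :
    Integrable fun t : ℝ => f t := by
  have cauchy_tail : (fun t : ℝ => ((t : ℂ) ^ 2)⁻¹) =O[cobounded ℝ] fun t => (1 + t ^ 2)⁻¹ := by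
    refine .of_bound 2 ?_
    filter_upwards [eventually_cobounded_le_norm 1] with t ht
    have one_le : 1 ≤ t ^ 2 := by simpa using one_le_pow₀ ht (n := 2)
    rw [norm_inv, norm_pow, Complex.norm_real, Real.norm_eq_abs, sq_abs,
      Real.norm_of_nonneg (by positivity), inv_eq_one_div, ← div_eq_mul_inv,
      div_le_div_iff₀ (by positivity) (by positivity)]
    linarith
  have decay := (hdecay.comp_tendsto tendsto_ofReal_cobounded_upperHalfPlane).trans cauchy_tail
  exact (continuous_comp_ofReal hf).locallyIntegrable.integrable_of_isBigO_cocompact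
    (Metric.cobounded_eq_cocompact (α := ℝ) ▸ decay)
    (integrable_inv_one_add_sq.integrableAtFilter _)

theorem intervalIntegral_comp_ofReal_eq_rectangle_sides
    (hf : DiffContOnCl ℂ f {z : ℂ | 0 < z.im}) {R : ℝ} (hR : 0 ≤ R) :
    ∫ t in (-R)..R, f t = (∫ x in (-R)..R, f (x + R * Complex.I)) -
      Complex.I • (∫ y in (0 : ℝ)..R, f ((R : ℝ) + y * Complex.I)) +
      Complex.I • ∫ y in (0 : ℝ)..R, f ((-R : ℝ) + y * Complex.I) := by
  have cauchy := Complex.integral_boundary_rect_eq_zero_of_continuousOn_of_differentiableOn f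
    (-R : ℝ) (R + R * Complex.I)
    ((continuousOn_closed_upperHalfPlane hf).mono fun z hz => by
      have : z.im ∈ uIcc 0 R := by simpa using hz.2
      exact (uIcc_of_le hR ▸ this).1)
    (hf.differentiableOn.mono fun z hz => by simpa [hR] using hz.2.1)
  rw [← sub_eq_zero, ← cauchy]
  simp only [Complex.ofReal_neg, Complex.neg_im, Complex.ofReal_im, neg_zero, Complex.ofReal_zero,
    zero_mul, add_zero, Complex.neg_re, Complex.ofReal_re, Complex.add_re, Complex.mul_re,
    Complex.I_re, mul_zero, Complex.I_im, mul_one, sub_self, Complex.add_im, Complex.mul_im,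
    zero_add]
  abel

theorem integral_comp_ofReal_eq_zero_of_isBigO
    (hf : DiffContOnCl ℂ f {z : ℂ | 0 < z.im})
    (hdecay : f =O[cobounded ℂ ⊓ 𝓟 {z | 0 ≤ z.im}] fun z => (z ^ 2)⁻¹) :
    ∫ t : ℝ, f t = 0 := by
  have limit : Tendsto (fun R : ℝ => ∫ t in (-R)..R, f t) atTop (𝓝 (∫ t : ℝ, f t)) :=
    intervalIntegral_tendsto_integral (integrable_comp_ofReal_of_isBigO hf hdecay)
      tendsto_neg_atTop_atBot tendsto_id
  obtain ⟨C, hC⟩ := eventually_norm_le_div_sq_of_isBigO hdecay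
  refine tendsto_nhds_unique limit (squeeze_zero_norm' (a := fun R => 4 * C / R) ?_
    (tendsto_const_nhds.div_atTop tendsto_id))
  filter_upwards [hC, eventually_gt_atTop 0] with R bound hR
  have side (γ : ℝ → ℂ) (a b : ℝ) (hγ : ∀ x ∈ uIoc a b, 0 ≤ (γ x).im ∧ R ≤ ‖γ x‖) :
      ‖∫ x in a..b, f (γ x)‖ ≤ C / R ^ 2 * |b - a| :=
    intervalIntegral.norm_integral_le_of_norm_le_const fun x hx => bound _ (hγ x hx).1 (hγ x hx).2
  have top := side (fun x => x + R * Complex.I) (-R) R fun x _ =>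
    ⟨by simp [hR.le],
      (le_abs_self R).trans (by simpa using Complex.abs_im_le_norm (x + R * Complex.I))⟩
  have vertical (c : ℝ) (hc : |c| = R) := side (fun y => c + y * Complex.I) 0 R fun y hy =>
    ⟨by simpa using (uIoc_of_le hR.le ▸ hy).1.le,
      hc ▸ (by simpa using Complex.abs_re_le_norm (c + y * Complex.I))⟩
  have right := vertical R (abs_of_pos hR)
  have left := vertical (-R) ((abs_neg R).trans (abs_of_pos hR))
  calc ‖∫ t in (-R)..R, f t‖
      ≤ C / R ^ 2 * |R - -R| + C / R ^ 2 * |R - 0| + C / R ^ 2 * |R - 0| := by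
        rw [intervalIntegral_comp_ofReal_eq_rectangle_sides hf hR.le]
        refine (norm_add_le_of_le (norm_sub_le_of_le top ?_) ?_)
        · rwa [norm_smul, Complex.norm_I, one_mul]
        · rwa [norm_smul, Complex.norm_I, one_mul]
    _ = 4 * C / R := by
        rw [sub_neg_eq_add, sub_zero, abs_of_pos hR, abs_of_pos (by positivity)]
        field_simp
        ring

end HalfPlane

/-- The Poisson kernel `P_s(u) = s / (π (u² + s²))` of the upper half-plane at height `s`. -/
noncomputable def halfPlanePoissonKernel (s u : ℝ) : ℝ :=
  π⁻¹ * (s / (u ^ 2 + s ^ 2))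

section PoissonKernel

variable {s : ℝ}

theorem halfPlanePoissonKernel_nonneg (hs : 0 < s) (u : ℝ) : 0 ≤ halfPlanePoissonKernel s u := by
  unfold halfPlanePoissonKernel
  positivity

theorem halfPlanePoissonKernel_sub_comm (s x t : ℝ) :
    halfPlanePoissonKernel s (x - t) = halfPlanePoissonKernel s (t - x) := by
  rw [halfPlanePoissonKernel, halfPlanePoissonKernel, ← neg_sub t x, neg_sq]

theorem measurable_halfPlanePoissonKernel (s : ℝ) : Measurable (halfPlanePoissonKernel s) := by
  unfold halfPlanePoissonKernel
  fun_prop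

theorem continuous_halfPlanePoissonKernel (hs : 0 < s) : Continuous (halfPlanePoissonKernel s) := by
  unfold halfPlanePoissonKernel
  fun_prop (disch := intro; positivity)

theorem halfPlanePoissonKernel_eq_div (hs : 0 < s) (u : ℝ) :
    halfPlanePoissonKernel s u = (π * s)⁻¹ * (1 + (u / s) ^ 2)⁻¹ := by
  rw [halfPlanePoissonKernel]
  field_simp
  ring

theorem integrable_halfPlanePoissonKernel (hs : 0 < s) : Integrable (halfPlanePoissonKernel s) := by
  simp only [funext (halfPlanePoissonKernel_eq_div hs)]
  exact (integrable_inv_one_add_sq.comp_div hs.ne').const_mul _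

theorem integral_halfPlanePoissonKernel (hs : 0 < s) : ∫ u, halfPlanePoissonKernel s u = 1 := by
  simp only [halfPlanePoissonKernel_eq_div hs, integral_const_mul]
  rw [Measure.integral_comp_div (fun u : ℝ => (1 + u ^ 2)⁻¹), integral_univ_inv_one_add_sq,
    abs_of_pos hs, smul_eq_mul, mul_comm s, inv_mul_cancel₀ (by positivity)]

theorem halfPlanePoissonKernel_le (hs : 0 < s) (u : ℝ) :
    halfPlanePoissonKernel s u ≤ (π * s)⁻¹ := by
  rw [halfPlanePoissonKernel_eq_div hs]
  exact mul_le_of_le_one_right (by positivity)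
    (inv_le_one_of_one_le₀ (le_add_of_nonneg_right (sq_nonneg (u / s))))

theorem abs_halfPlanePoissonKernel_le (hs : 0 < s) (u : ℝ) :
    |halfPlanePoissonKernel s u| ≤ (π * s)⁻¹ :=
  (abs_of_nonneg (halfPlanePoissonKernel_nonneg hs u)).trans_le (halfPlanePoissonKernel_le hs u)

theorem memLp_halfPlanePoissonKernel (hs : 0 < s) : MemLp (halfPlanePoissonKernel s) 2 := by
  rw [memLp_two_iff_integrable_sq (continuous_halfPlanePoissonKernel hs).aestronglyMeasurable]
  simp only [sq]
  exact (integrable_halfPlanePoissonKernel hs).bdd_mul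
    (continuous_halfPlanePoissonKernel hs).aestronglyMeasurable
    (.of_forall (abs_halfPlanePoissonKernel_le hs))

end PoissonKernel

theorem integrable_comp_sub_smul_of_bounded {E : Type*} [NormedAddCommGroup E] [NormedSpace ℝ E]
    {f : ℝ → E} {K : ℝ → ℝ} {C : ℝ} (hf : Integrable f) (hK : Measurable K) (hC : ∀ u, |K u| ≤ C)
    (t : ℝ) : Integrable fun x => K (x - t) • f x :=
  hf.bdd_smul C (hK.comp (measurable_id.sub_const t)).aestronglyMeasurable
    (.of_forall fun x => hC (x - t))

section PoissonFormula

variable {E : Type*} [NormedAddCommGroup E] [NormedSpace ℂ E] {f : ℂ → E}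

theorem isBigO_inv_sub_cobounded (p : ℂ) :
    (fun z => (z - p)⁻¹) =O[cobounded ℂ] fun z => z⁻¹ := by
  refine .of_bound 2 ?_
  filter_upwards [eventually_cobounded_le_norm (2 * ‖p‖ + 1)] with z hz
  have half : ‖z‖ / 2 ≤ ‖z - p‖ := by linarith [norm_sub_norm_le z p, norm_nonneg p]
  have pos : 0 < ‖z‖ := by linarith [norm_nonneg p]
  calc ‖(z - p)⁻¹‖ ≤ (‖z‖ / 2)⁻¹ := by rw [norm_inv]; gcongr
    _ = 2 * ‖z⁻¹‖ := by rw [norm_inv, inv_div, div_eq_mul_inv]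

theorem halfPlanePoissonKernel_eq_inv_mul_inv {s : ℝ} (hs : 0 < s) (a t : ℝ) :
    ((t - (a + s * Complex.I))⁻¹ * (t - (a - s * Complex.I))⁻¹ : ℂ) =
      (π / s : ℝ) * halfPlanePoissonKernel s (t - a) := by
  have kernel : π / s * halfPlanePoissonKernel s (t - a) = ((t - a) ^ 2 + s ^ 2)⁻¹ := by
    rw [halfPlanePoissonKernel]
    field_simp
  rw [← mul_inv, ← Complex.ofReal_mul, kernel]
  push_cast
  congr 1
  linear_combination (-(s : ℂ) ^ 2) * Complex.I_sq

theorem isBigO_dslope_of_bounded {B : ℝ} (hB : ∀ z : ℂ, 0 ≤ z.im → ‖f z‖ ≤ B) (p : ℂ) :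
    dslope f p =O[cobounded ℂ ⊓ 𝓟 {z | 0 ≤ z.im}] fun z => z⁻¹ := by
  have slope_eq :
      (fun z => (z - p)⁻¹ • (f z - f p)) =ᶠ[cobounded ℂ ⊓ 𝓟 {z | 0 ≤ z.im}] dslope f p := by
    filter_upwards [(eventually_ne_cobounded p).filter_mono inf_le_left] with z hz
    rw [dslope_of_ne _ hz, slope_def_module]
  have bounded : (fun z => f z - f p) =O[cobounded ℂ ⊓ 𝓟 {z | 0 ≤ z.im}] fun _ => (1 : ℂ) := by
    refine .of_bound (B + ‖f p‖) ?_
    filter_upwards [mem_inf_of_right (mem_principal_self _)] with z hz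
    simpa using norm_sub_le_of_le (hB z hz) le_rfl
  simpa using (((isBigO_inv_sub_cobounded p).mono inf_le_left).smul bounded).congr' slope_eq .rfl

theorem integrable_halfPlanePoissonKernel_smul {s : ℝ} (hs : 0 < s) {g : ℝ → E} {B : ℝ}
    (hg : AEStronglyMeasurable g) (hB : ∀ t, ‖g t‖ ≤ B) (a : ℝ) :
    Integrable fun t => halfPlanePoissonKernel s (t - a) • g t :=
  ((integrable_halfPlanePoissonKernel hs).comp_sub_right a).smul_bdd B hg (.of_forall hB)

theorem diffContOnCl_dslope [CompleteSpace E] {U : Set ℂ} (hU : IsOpen U) {p : ℂ} (hp : p ∈ U)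
    (hf : DiffContOnCl ℂ f U) : DiffContOnCl ℂ (dslope f p) U :=
  ⟨(Complex.differentiableOn_dslope (hU.mem_nhds hp)).2 hf.differentiableOn,
    (continuousOn_dslope (mem_of_superset (hU.mem_nhds hp) subset_closure)).2
      ⟨hf.continuousOn, hf.differentiableAt hU hp⟩⟩

theorem diffContOnCl_inv_sub_upperHalfPlane {q : ℂ} (hq : q.im < 0) :
    DiffContOnCl ℂ (fun z => (z - q)⁻¹) {z : ℂ | 0 < z.im} := by
  refine DiffContOnCl.inv (by fun_prop : Differentiable ℂ fun z => z - q).diffContOnCl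
    fun z hz => sub_ne_zero.2 ?_
  rw [Complex.closure_setOfPred_lt_im] at hz
  rintro rfl
  exact hq.not_ge hz

/-- Cauchy's theorem applied to `(f z - f p) / ((z - p) (z - conj p))`, whose restriction to the
real line is a multiple of the Poisson kernel times `f - f p`. -/
theorem integral_halfPlanePoissonKernel_smul [CompleteSpace E]
    (hf : DiffContOnCl ℂ f {z : ℂ | 0 < z.im}) {B : ℝ} (hB : ∀ z : ℂ, 0 ≤ z.im → ‖f z‖ ≤ B)
    (a : ℝ) {s : ℝ} (hs : 0 < s) :
    ∫ t : ℝ, halfPlanePoissonKernel s (t - a) • f t = f (a + s * Complex.I) := by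
  set p : ℂ := a + s * Complex.I with hp
  set q : ℂ := a - s * Complex.I with hq
  have hp_im : 0 < p.im := by simpa [hp] using hs
  have hq_im : q.im < 0 := by simpa [hq] using hs
  have vanishing : ∫ t : ℝ, ((t : ℂ) - q)⁻¹ • dslope f p t = 0 := by
    refine integral_comp_ofReal_eq_zero_of_isBigO (f := fun z => (z - q)⁻¹ • dslope f p z)
      ((diffContOnCl_inv_sub_upperHalfPlane hq_im).smul
        (diffContOnCl_dslope (isOpen_lt continuous_const Complex.continuous_im) hp_im hf)) ?_
    simpa only [smul_eq_mul, ← sq, ← inv_pow] using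
      ((isBigO_inv_sub_cobounded q).mono inf_le_left).smul (isBigO_dslope_of_bounded hB p)
  have integrand (t : ℝ) : ((t : ℂ) - q)⁻¹ • dslope f p t =
      (π / s) • (halfPlanePoissonKernel s (t - a) • f t -
        halfPlanePoissonKernel s (t - a) • f p) := by
    have ht : (t : ℂ) ≠ p := fun h => by simp [← h] at hp_im
    rw [dslope_of_ne _ ht, slope_def_module, smul_smul, mul_comm,
      halfPlanePoissonKernel_eq_inv_mul_inv hs, ← Complex.ofReal_mul, Complex.coe_smul, mul_smul,
      smul_sub]
  have integrable_f : Integrable fun t : ℝ => halfPlanePoissonKernel s (t - a) • f t :=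
    integrable_halfPlanePoissonKernel_smul hs (continuous_comp_ofReal hf).aestronglyMeasurable
      (fun t => hB t (Complex.ofReal_im t).ge) a
  have integrable_const : Integrable fun t => halfPlanePoissonKernel s (t - a) • f p :=
    ((integrable_halfPlanePoissonKernel hs).comp_sub_right a).smul_const _
  simp only [integrand, integral_smul] at vanishing
  rw [integral_sub integrable_f integrable_const, integral_smul_const,
    integral_sub_right_eq_self (halfPlanePoissonKernel s), integral_halfPlanePoissonKernel hs,
    one_smul] at vanishing
  exact sub_eq_zero.1 ((smul_eq_zero.1 vanishing).resolve_left (by positivity))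

end PoissonFormula

section PoissonLebesguePoint

open Metric

variable {E : Type*} [NormedAddCommGroup E] {f : ℝ → E} {t : ℝ}

/-- `t` is a Poisson–Lebesgue point of `f` if the Poisson averages of `‖f - f t‖` at height `s`
above `t` tend to zero as `s → 0⁺`. At such a point every family of kernels dominated by the Poisson
kernel, with constant integral, has a limit; the averages are `ℝ≥0∞`-valued so that their
convergence includes their eventual finiteness. -/
def IsPoissonLebesguePoint (f : ℝ → E) (t : ℝ) : Prop :=
  Tendsto (fun s => ∫⁻ x, ENNReal.ofReal (halfPlanePoissonKernel s (x - t)) * ‖f x - f t‖ₑ)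
    (𝓝[>] 0) (𝓝 0)

theorem exists_halfPlanePoissonKernel_le_dyadic {s : ℝ} (hs : 0 < s) (u : ℝ) :
    ∃ k : ℕ, |u| ≤ 2 ^ k * s ∧ halfPlanePoissonKernel s u ≤ 4 / (π * (4 ^ k * s)) := by
  have four_pow (k : ℕ) : (4 : ℝ) ^ k = (2 ^ k) ^ 2 := by
    rw [← pow_mul, mul_comm, pow_mul]
    norm_num
  suffices ∃ k : ℕ, |u| ≤ 2 ^ k * s ∧ 4 ^ k * s ^ 2 ≤ 4 * (u ^ 2 + s ^ 2) by
    obtain ⟨k, hu, hk⟩ := this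
    refine ⟨k, hu, ?_⟩
    rw [halfPlanePoissonKernel, ← div_eq_inv_mul, div_div,
      div_le_div_iff₀ (by positivity) (by positivity)]
    nlinarith [mul_le_mul_of_nonneg_left hk Real.pi_pos.le]
  obtain hu | hu := le_total |u| s
  · exact ⟨0, by simpa using hu, by nlinarith [sq_nonneg u, sq_nonneg s]⟩
  · obtain ⟨k, hk, hk'⟩ := exists_nat_pow_near ((one_le_div hs).2 hu) one_lt_two
    rw [le_div_iff₀ hs] at hk
    rw [div_lt_iff₀ hs] at hk'
    have square : (2 ^ k * s) ^ 2 ≤ u ^ 2 := by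
      rw [← sq_abs u]
      gcongr
    refine ⟨k + 1, hk'.le, ?_⟩
    rw [pow_succ, four_pow]
    nlinarith [sq_nonneg s]

theorem lintegral_halfPlanePoissonKernel_mul_le_tsum_laverage {s : ℝ} (hs : 0 < s) {h : ℝ → ℝ≥0∞}
    (hh : AEMeasurable h) (t : ℝ) :
    ∫⁻ x, ENNReal.ofReal (halfPlanePoissonKernel s (x - t)) * h x ≤
      ∑' k : ℕ, ENNReal.ofReal (8 / π) * 2⁻¹ ^ k *
        ⨍⁻ x in closedBall t (2 ^ k * s), h x ∂volume := by
  have dyadic (x : ℝ) : ENNReal.ofReal (halfPlanePoissonKernel s (x - t)) * h x ≤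
      ∑' k : ℕ, ENNReal.ofReal (4 / (π * (4 ^ k * s))) *
        (closedBall t (2 ^ k * s)).indicator h x := by
    obtain ⟨k, hxk, hk⟩ := exists_halfPlanePoissonKernel_le_dyadic hs (x - t)
    refine le_trans ?_ (ENNReal.le_tsum k)
    rw [indicator_of_mem (by rwa [mem_closedBall, Real.dist_eq])]
    gcongr
  have ball_term (k : ℕ) : ∫⁻ x, ENNReal.ofReal (4 / (π * (4 ^ k * s))) *
        (closedBall t (2 ^ k * s)).indicator h x =
      ENNReal.ofReal (8 / π) * 2⁻¹ ^ k * ⨍⁻ x in closedBall t (2 ^ k * s), h x ∂volume := by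
    rw [lintegral_const_mul'' _ (hh.indicator measurableSet_closedBall),
      lintegral_indicator measurableSet_closedBall,
      ← measure_mul_setLAverage _ (isCompact_closedBall t _).measure_ne_top, Real.volume_closedBall,
      ← mul_assoc, ← ENNReal.ofReal_mul (by positivity)]
    congr 1
    rw [← ENNReal.ofReal_ofNat, ← ENNReal.ofReal_inv_of_pos two_pos,
      ← ENNReal.ofReal_pow (by positivity), ← ENNReal.ofReal_mul (by positivity)]
    congr 1
    rw [show (4 : ℝ) = 2 * 2 by norm_num, mul_pow, inv_pow]
    field_simp
    norm_num
  calc _ ≤ _ := lintegral_mono dyadic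
    _ = _ := by
      rw [lintegral_tsum fun k => (hh.indicator measurableSet_closedBall).const_mul _]
      simp only [ball_term]

theorem ae_tendsto_laverage_closedBall (hf : LocallyIntegrable f) :
    ∀ᵐ t, Tendsto (fun r => ⨍⁻ x in closedBall t r, ‖f x - f t‖ₑ ∂volume) (𝓝[>] 0) (𝓝 0) := by
  simp only [setLAverage_eq]
  filter_upwards
    [(IsUnifLocDoublingMeasure.vitaliFamily volume 1).ae_tendsto_lintegral_enorm_sub_div hf]
    with t ht
  exact ht.comp (IsUnifLocDoublingMeasure.tendsto_closedBall_filterAt volume (fun _ => t) id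
    tendsto_id (eventually_mem_nhdsWithin.mono fun r hr => by
      simpa using (mem_Ioi.1 hr).le))

theorem laverage_closedBall_le {p : ℝ≥0∞} (hp : 1 ≤ p) (hf : AEStronglyMeasurable f) {δ r : ℝ}
    (hδ : 0 < δ) (hr : δ ≤ r) (t : ℝ) :
    ⨍⁻ x in closedBall t r, ‖f x‖ₑ ∂volume ≤
      eLpNorm f p volume * volume (closedBall t δ) ^ (-(1 / p.toReal)) := by
  set B := closedBall t r
  have pos : volume B ≠ 0 := (measure_closedBall_pos volume t (hδ.trans_le hr)).ne'
  have finite : volume B ≠ ⊤ := (isCompact_closedBall t r).measure_ne_top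
  calc ⨍⁻ x in B, ‖f x‖ₑ ∂volume = eLpNorm f 1 (volume.restrict B) / volume B := by
        rw [setLAverage_eq, eLpNorm_one_eq_lintegral_enorm]
    _ ≤ eLpNorm f p volume * volume B ^ (1 - 1 / p.toReal) / volume B := by
        gcongr
        refine (eLpNorm_le_eLpNorm_mul_rpow_measure_univ hp hf.restrict).trans ?_
        simp only [Measure.restrict_apply_univ, ENNReal.toReal_one, div_one]
        gcongr
        exact Measure.restrict_le_self
    _ = eLpNorm f p volume * volume B ^ (-(1 / p.toReal)) := by
        rw [mul_div_assoc, ENNReal.rpow_sub _ _ pos finite, ENNReal.rpow_one, ENNReal.rpow_neg,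
          div_eq_mul_inv, div_eq_mul_inv, mul_right_comm, ENNReal.mul_inv_cancel pos finite,
          one_mul]
    _ ≤ eLpNorm f p volume * volume (closedBall t δ) ^ (-(1 / p.toReal)) := by
        simp only [ENNReal.rpow_neg]
        gcongr
        exact closedBall_subset_closedBall hr

theorem exists_laverage_closedBall_le {p : ℝ≥0∞} (hp : 1 ≤ p) (hf : MemLp f p)
    (ht : Tendsto (fun r => ⨍⁻ x in closedBall t r, ‖f x - f t‖ₑ ∂volume) (𝓝[>] 0) (𝓝 0)) :
    ∃ M < ∞, ∀ r > 0, ⨍⁻ x in closedBall t r, ‖f x - f t‖ₑ ∂volume ≤ M := by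
  obtain ⟨δ, hδ, small⟩ := mem_nhdsGT_iff_exists_Ioc_subset.1 (ht.eventually_le_const one_pos)
  set far := eLpNorm f p volume * volume (closedBall t δ) ^ (-(1 / p.toReal)) + ‖f t‖ₑ with hfar
  have far_lt_top : far < ∞ := by
    refine ENNReal.add_lt_top.2 ⟨ENNReal.mul_lt_top hf.eLpNorm_lt_top ?_, enorm_lt_top⟩
    rw [ENNReal.rpow_neg, ENNReal.inv_lt_top]
    exact ENNReal.rpow_pos (measure_closedBall_pos volume t hδ)
      (isCompact_closedBall t δ).measure_ne_top
  refine ⟨max 1 far, max_lt ENNReal.one_lt_top far_lt_top, fun r hr => ?_⟩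
  obtain hrδ | hrδ := le_total r δ
  · exact le_max_of_le_left (small ⟨hr, hrδ⟩)
  · refine le_max_of_le_right ?_
    calc ⨍⁻ x in closedBall t r, ‖f x - f t‖ₑ ∂volume
        ≤ ⨍⁻ x in closedBall t r, (‖f x‖ₑ + ‖f t‖ₑ) ∂volume :=
          lintegral_mono fun x => enorm_sub_le
      _ = (⨍⁻ x in closedBall t r, ‖f x‖ₑ ∂volume) + ⨍⁻ _ in closedBall t r, ‖f t‖ₑ ∂volume :=
          lintegral_add_right _ measurable_const
      _ = (⨍⁻ x in closedBall t r, ‖f x‖ₑ ∂volume) + ‖f t‖ₑ := by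
          rw [setLAverage_const (measure_closedBall_pos volume t hr).ne'
            (isCompact_closedBall t r).measure_ne_top]
      _ ≤ far := by
          rw [hfar]
          gcongr
          exact laverage_closedBall_le hp hf.aestronglyMeasurable hδ hrδ t

theorem ae_isPoissonLebesguePoint {p : ℝ≥0∞} (hp : 1 ≤ p) (hf : MemLp f p) :
    ∀ᵐ t, IsPoissonLebesguePoint f t := by
  filter_upwards [ae_tendsto_laverage_closedBall (hf.locallyIntegrable hp)] with t ht
  obtain ⟨M, hM, bound⟩ := exists_laverage_closedBall_le hp hf ht
  have weights_summable : ∑' k : ℕ, ENNReal.ofReal (8 / π) * 2⁻¹ ^ k * M ≠ ∞ := by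
    rw [ENNReal.tsum_mul_right, ENNReal.tsum_mul_left, ENNReal.tsum_geometric]
    simp [ENNReal.mul_ne_top, hM.ne]
  have term_tendsto (k : ℕ) : Tendsto (fun s => ENNReal.ofReal (8 / π) * 2⁻¹ ^ k *
      ⨍⁻ x in closedBall t (2 ^ k * s), ‖f x - f t‖ₑ ∂volume) (𝓝[>] 0) (𝓝 0) := by
    have radius : Tendsto (fun s : ℝ => 2 ^ k * s) (𝓝[>] 0) (𝓝[>] 0) := by
      refine tendsto_nhdsWithin_iff.2 ⟨?_, eventually_mem_nhdsWithin.mono fun s hs => ?_⟩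
      · exact ((continuous_const_mul ((2 : ℝ) ^ k)).tendsto' 0 0 (mul_zero _)).mono_left
          nhdsWithin_le_nhds
      · exact mul_pos (pow_pos two_pos k) (mem_Ioi.1 hs)
    simpa using ENNReal.Tendsto.const_mul (ht.comp radius)
      (.inr (ENNReal.mul_ne_top ENNReal.ofReal_ne_top (by simp)))
  have dyadic : Tendsto (fun s => ∑' k : ℕ, ENNReal.ofReal (8 / π) * 2⁻¹ ^ k *
      ⨍⁻ x in closedBall t (2 ^ k * s), ‖f x - f t‖ₑ ∂volume) (𝓝[>] 0) (𝓝 0) := by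
    simp only [← lintegral_count] at weights_summable ⊢
    refine lintegral_zero (μ := .count (α := ℕ)) ▸
      tendsto_lintegral_filter_of_dominated_convergence _
        (.of_forall fun s => measurable_of_countable _) ?_ weights_summable
        (ae_of_all _ term_tendsto)
    filter_upwards [self_mem_nhdsWithin] with s hs
    refine ae_of_all _ fun k => ?_
    gcongr
    exact bound _ (mul_pos (by positivity) hs)
  refine tendsto_of_tendsto_of_tendsto_of_le_of_le' tendsto_const_nhds dyadic
    (.of_forall fun _ => zero_le) (eventually_mem_nhdsWithin.mono fun s hs => ?_)
  exact lintegral_halfPlanePoissonKernel_mul_le_tsum_laverage hs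
    (hf.aestronglyMeasurable.sub aestronglyMeasurable_const).enorm t

theorem IsPoissonLebesguePoint.tendsto_integral_smul [NormedSpace ℝ E] [CompleteSpace E]
    (ht : IsPoissonLebesguePoint f t) (hf : AEStronglyMeasurable f) {K : ℝ → ℝ → ℝ} {m : ℝ}
    (hK : ∀ s, Measurable (K s)) (hKP : ∀ s > 0, ∀ u, |K s u| ≤ halfPlanePoissonKernel s u)
    (hm : ∀ s > 0, ∫ u, K s u = m) :
    Tendsto (fun s => ∫ x, K s (x - t) • f x) (𝓝[>] 0) (𝓝 (m • f t)) := by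
  have integrable_kernel (s : ℝ) (hs : 0 < s) : Integrable (fun x => K s (x - t)) :=
    ((integrable_halfPlanePoissonKernel hs).mono' (hK s).aestronglyMeasurable
      (.of_forall (hKP s hs))).comp_sub_right t
  have dominated (s : ℝ) (hs : 0 < s) : ∫⁻ x, ‖K s (x - t) • (f x - f t)‖ₑ ≤
      ∫⁻ x, ENNReal.ofReal (halfPlanePoissonKernel s (x - t)) * ‖f x - f t‖ₑ := by
    gcongr with x
    rw [enorm_smul, ← ofReal_norm]
    gcongr
    exact hKP s hs _
  have error_eq : ∀ᶠ s in 𝓝[>] 0, ∫ x, K s (x - t) • (f x - f t) =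
      (∫ x, K s (x - t) • f x) - m • f t := by
    filter_upwards [self_mem_nhdsWithin, ht.eventually_lt_const ENNReal.zero_lt_top] with s hs hfin
    have integrable_error : Integrable fun x => K s (x - t) • (f x - f t) :=
      ⟨(integrable_kernel s hs).aestronglyMeasurable.smul (hf.sub aestronglyMeasurable_const),
        (dominated s hs).trans_lt hfin⟩
    have integrable_const := (integrable_kernel s hs).smul_const (f t)
    rw [← hm s hs, ← integral_sub_right_eq_self (K s) t, ← integral_smul_const, eq_sub_iff_add_eq,
      ← integral_add integrable_error integrable_const]
    simp only [smul_sub, sub_add_cancel]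
  have error_tendsto : Tendsto (fun s => ∫ x, K s (x - t) • (f x - f t)) (𝓝[>] 0) (𝓝 0) := by
    rw [tendsto_zero_iff_enorm_tendsto_zero]
    refine tendsto_of_tendsto_of_tendsto_of_le_of_le' tendsto_const_nhds ht
      (.of_forall fun _ => zero_le) ?_
    filter_upwards [self_mem_nhdsWithin] with s hs
    exact (enorm_integral_le_lintegral_enorm _).trans (dominated s hs)
  exact tendsto_sub_nhds_zero_iff.1 (error_tendsto.congr' error_eq)

theorem IsPoissonLebesguePoint.tendsto_integral_halfPlanePoissonKernel_smul [NormedSpace ℝ E]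
    [CompleteSpace E] (ht : IsPoissonLebesguePoint f t) (hf : AEStronglyMeasurable f) :
    Tendsto (fun s => ∫ x, halfPlanePoissonKernel s (x - t) • f x) (𝓝[>] 0) (𝓝 (f t)) := by
  simpa only [one_smul] using ht.tendsto_integral_smul hf measurable_halfPlanePoissonKernel
    (fun s hs u => (abs_of_nonneg (halfPlanePoissonKernel_nonneg hs u)).le)
    fun s hs => integral_halfPlanePoissonKernel hs

end PoissonLebesguePoint

/-- The kernel `Q_s(u) = u / (π (u² + s²))` conjugate to the Poisson kernel of the upper
half-plane at height `s`. -/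
noncomputable def conjPoissonKernel (s u : ℝ) : ℝ :=
  π⁻¹ * (u / (u ^ 2 + s ^ 2))

/-- The kernel `1 / (π u)` of the Hilbert transform, truncated to `|u| > s`. -/
noncomputable def truncatedHilbertKernel (s u : ℝ) : ℝ :=
  if s < |u| then (π * u)⁻¹ else 0

section ConjugateKernel

theorem measurable_conjPoissonKernel (s : ℝ) : Measurable (conjPoissonKernel s) := by
  unfold conjPoissonKernel
  fun_prop

theorem abs_conjPoissonKernel_le {s : ℝ} (hs : 0 < s) (u : ℝ) :
    |conjPoissonKernel s u| ≤ (π * s)⁻¹ := by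
  have : |u| * s ≤ u ^ 2 + s ^ 2 := by nlinarith [sq_nonneg (|u| - s), sq_abs u, abs_nonneg u]
  rw [conjPoissonKernel, abs_mul, abs_div, abs_of_pos (by positivity : 0 < u ^ 2 + s ^ 2),
    abs_of_pos (by positivity), mul_inv]
  gcongr
  rwa [div_le_iff₀ (by positivity), ← div_eq_inv_mul, le_div_iff₀ hs]

theorem measurable_truncatedHilbertKernel (s : ℝ) : Measurable (truncatedHilbertKernel s) :=
  Measurable.ite (measurableSet_lt measurable_const (by fun_prop)) (by fun_prop) measurable_const

theorem abs_truncatedHilbertKernel_le {s : ℝ} (hs : 0 < s) (u : ℝ) :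
    |truncatedHilbertKernel s u| ≤ (π * s)⁻¹ := by
  rw [truncatedHilbertKernel]
  split_ifs with h
  · rw [abs_inv, abs_mul, abs_of_pos Real.pi_pos]
    gcongr
  · rw [abs_zero]
    positivity

theorem abs_conjPoissonKernel_sub_truncatedHilbertKernel_le {s : ℝ} (hs : 0 < s) (u : ℝ) :
    |conjPoissonKernel s u - truncatedHilbertKernel s u| ≤ halfPlanePoissonKernel s u := by
  rw [conjPoissonKernel, truncatedHilbertKernel, halfPlanePoissonKernel]
  have hsum : 0 < u ^ 2 + s ^ 2 := by positivity
  split_ifs with h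
  · have hu : 0 < |u| := hs.trans h
    have hu0 : u ≠ 0 := abs_pos.1 hu
    rw [show π⁻¹ * (u / (u ^ 2 + s ^ 2)) - (π * u)⁻¹ = π⁻¹ * (-(s ^ 2) / (u * (u ^ 2 + s ^ 2))) by
      field_simp; ring, abs_mul, abs_div, abs_mul, abs_neg, abs_of_pos hsum,
      abs_of_pos (by positivity), abs_of_pos (by positivity)]
    refine mul_le_mul_of_nonneg_left ?_ (by positivity)
    rw [div_le_div_iff₀ (by positivity) hsum]
    nlinarith [mul_le_mul_of_nonneg_right h.le (mul_pos hs hsum).le]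
  · rw [sub_zero, abs_mul, abs_div, abs_of_pos hsum, abs_of_pos (by positivity)]
    gcongr
    exact not_lt.1 h

theorem integral_conjPoissonKernel_sub_truncatedHilbertKernel (s : ℝ) :
    ∫ u, (conjPoissonKernel s u - truncatedHilbertKernel s u) = 0 := by
  have odd (u : ℝ) : conjPoissonKernel s (-u) - truncatedHilbertKernel s (-u) =
      -(conjPoissonKernel s u - truncatedHilbertKernel s u) := by
    simp only [conjPoissonKernel, truncatedHilbertKernel, neg_sq, neg_div, mul_neg, abs_neg,
      inv_neg]
    split_ifs <;> ring
  have reflect := integral_neg_eq_self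
    (fun u => conjPoissonKernel s u - truncatedHilbertKernel s u) volume
  simp only [odd, integral_neg] at reflect
  linarith

end ConjugateKernel

/-- The Cauchy transform of `f`, normalised so that its boundary values from the upper half-plane
are `f - i T f`, where `T` is the Hilbert transform. -/
noncomputable def cauchyTransform (f : ℝ → ℂ) (z : ℂ) : ℂ :=
  (π * Complex.I)⁻¹ * ∫ x : ℝ, f x / (x - z)

section CauchyTransform

variable {f : ℝ → ℂ} {z : ℂ}

theorem im_le_norm_ofReal_sub (x : ℝ) (z : ℂ) : z.im ≤ ‖(x : ℂ) - z‖ := by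
  rw [norm_sub_rev]
  simpa using Complex.im_le_norm (z - x)

theorem ofReal_sub_ne_zero (hz : 0 < z.im) (x : ℝ) : (x : ℂ) - z ≠ 0 :=
  norm_pos_iff.1 (hz.trans_le (im_le_norm_ofReal_sub x z))

theorem norm_div_ofReal_sub_le (hz : 0 < z.im) (x : ℝ) : ‖f x / (x - z)‖ ≤ ‖f x‖ / z.im := by
  rw [norm_div]
  gcongr
  exact im_le_norm_ofReal_sub x z

theorem integrable_div_ofReal_sub (hf : Integrable f) (hz : 0 < z.im) :
    Integrable fun x : ℝ => f x / (x - z) :=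
  (hf.norm.div_const z.im).mono'
    (hf.aestronglyMeasurable.div₀
      (by fun_prop : Measurable fun x : ℝ => (x - z)).aestronglyMeasurable)
    (.of_forall (norm_div_ofReal_sub_le hz))

theorem norm_cauchyTransform_le (hf : Integrable f) (hz : 0 < z.im) :
    ‖cauchyTransform f z‖ ≤ (∫ x, ‖f x‖) / (π * z.im) := by
  have integral_le : ‖∫ x : ℝ, f x / (x - z)‖ ≤ (∫ x, ‖f x‖) / z.im := by
    rw [← integral_div]
    exact norm_integral_le_of_norm_le (hf.norm.div_const _)
      (.of_forall (norm_div_ofReal_sub_le hz))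
  rw [cauchyTransform, norm_mul, norm_inv, norm_mul, Complex.norm_real, Complex.norm_I, mul_one,
    Real.norm_of_nonneg Real.pi_pos.le, mul_comm π, ← div_div, ← div_eq_inv_mul]
  gcongr

theorem differentiableOn_cauchyTransform (hf : Integrable f) :
    DifferentiableOn ℂ (cauchyTransform f) {z | 0 < z.im} := by
  intro z hz
  have hz : 0 < z.im := hz
  have strip_nhds : {w : ℂ | z.im / 2 < w.im} ∈ 𝓝 z :=
    (isOpen_lt continuous_const Complex.continuous_im).mem_nhds (half_lt_self hz)
  have strip_im {w : ℂ} (hw : z.im / 2 < w.im) : 0 < w.im := (half_pos hz).trans hw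
  have deriv_bound (x : ℝ) (w : ℂ) (hw : z.im / 2 < w.im) :
      ‖f x / (x - w) ^ 2‖ ≤ ‖f x‖ / (z.im / 2) ^ 2 := by
    rw [norm_div, norm_pow]
    gcongr
    exact hw.le.trans (im_le_norm_ofReal_sub x w)
  have hasDerivAt_integrand (x : ℝ) (w : ℂ) (hw : z.im / 2 < w.im) :
      HasDerivAt (fun w : ℂ => f x / (x - w)) (f x / (x - w) ^ 2) w := by
    simpa [div_eq_mul_inv] using (((hasDerivAt_id w).const_sub (x : ℂ)).fun_inv
      (ofReal_sub_ne_zero (strip_im hw) x)).const_mul (f x)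
  have key := hasDerivAt_integral_of_dominated_loc_of_deriv_le (μ := volume)
    (F := fun (w : ℂ) (x : ℝ) => f x / (x - w)) (bound := fun x => ‖f x‖ / (z.im / 2) ^ 2)
    strip_nhds (mem_of_superset strip_nhds fun w hw =>
      (integrable_div_ofReal_sub hf (strip_im hw)).aestronglyMeasurable)
    (integrable_div_ofReal_sub hf hz)
    (hf.aestronglyMeasurable.div₀
      (by fun_prop : Measurable fun x : ℝ => (x - z) ^ 2).aestronglyMeasurable)
    (.of_forall deriv_bound) (hf.norm.div_const _) (.of_forall hasDerivAt_integrand)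
  exact (key.2.differentiableAt.const_mul _).differentiableWithinAt

theorem isBigO_cauchyTransform_cobounded {R : ℝ} (hf : Integrable f)
    (hR : ∀ x, R < |x| → f x = 0) : cauchyTransform f =O[cobounded ℂ] fun z => z⁻¹ := by
  refine .const_mul_left (.of_bound (∫ x, 2 * ‖f x‖) ?_) _
  filter_upwards [eventually_cobounded_le_norm (2 * R),
    eventually_ne_cobounded 0] with z hzR hz0
  rw [← integral_mul_const]
  refine norm_integral_le_of_norm_le ((hf.norm.const_mul 2).mul_const _) (.of_forall fun x => ?_)
  rcases lt_or_ge R |x| with hx | hx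
  · simp [hR x hx]
  · have half_norm_le : ‖z‖ / 2 ≤ ‖(x : ℂ) - z‖ := by
      have := norm_sub_norm_le z x
      rw [norm_sub_rev, Complex.norm_real, Real.norm_eq_abs] at this
      linarith
    calc ‖f x / (x - z)‖ ≤ ‖f x‖ / (‖z‖ / 2) := by
          rw [norm_div]
          gcongr
      _ = 2 * ‖f x‖ * ‖z⁻¹‖ := by
          rw [norm_inv]
          field_simp

theorem cauchyTransform_add_mul_I (hf : Integrable f) (t : ℝ) {s : ℝ} (hs : 0 < s) :
    cauchyTransform f (t + s * Complex.I) = (∫ x, halfPlanePoissonKernel s (x - t) • f x) -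
      Complex.I * ∫ x, conjPoissonKernel s (x - t) • f x := by
  have integrable_poisson := integrable_comp_sub_smul_of_bounded hf
    (measurable_halfPlanePoissonKernel s) (abs_halfPlanePoissonKernel_le hs) t
  have integrable_conj := integrable_comp_sub_smul_of_bounded hf
    (measurable_conjPoissonKernel s) (abs_conjPoissonKernel_le hs) t
  rw [cauchyTransform, ← integral_const_mul, ← integral_const_mul,
    ← integral_sub integrable_poisson (integrable_conj.const_mul _)]
  congr with x
  have hsum : ((x - t) ^ 2 + s ^ 2 : ℂ) ≠ 0 := by
    exact_mod_cast (by positivity : (x - t) ^ 2 + s ^ 2 ≠ 0)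
  have hx : (x - (t + Complex.I * s) : ℂ) ≠ 0 := ofReal_sub_ne_zero (by simpa using hs) x
  simp only [halfPlanePoissonKernel, conjPoissonKernel, Complex.real_smul]
  push_cast
  field_simp
  linear_combination f x * ((x - t) ^ 2 + s ^ 2 - Complex.I * s * (x - t)) * Complex.I_sq

section Shift

variable {R y : ℝ}

theorem im_add_mul_I_pos (hy : 0 < y) (hz : 0 ≤ z.im) : 0 < (z + y * Complex.I).im := by
  simpa using add_pos_of_nonneg_of_pos hz hy

theorem diffContOnCl_cauchyTransform_add_mul_I (hf : Integrable f) (hy : 0 < y) :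
    DiffContOnCl ℂ (fun z => cauchyTransform f (z + y * Complex.I)) {z : ℂ | 0 < z.im} := by
  refine DifferentiableOn.diffContOnCl
    ((differentiableOn_cauchyTransform hf).comp (by fun_prop) fun z hz => ?_)
  rw [Complex.closure_setOfPred_lt_im] at hz
  exact im_add_mul_I_pos hy hz

theorem norm_cauchyTransform_add_mul_I_le (hf : Integrable f) (hy : 0 < y) (hz : 0 ≤ z.im) :
    ‖cauchyTransform f (z + y * Complex.I)‖ ≤ (∫ x, ‖f x‖) / (π * y) := by
  refine (norm_cauchyTransform_le hf (im_add_mul_I_pos hy hz)).trans ?_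
  have : 0 ≤ ∫ x, ‖f x‖ := integral_nonneg fun _ => norm_nonneg _
  gcongr
  simpa using hz

theorem isBigO_cauchyTransform_add_mul_I (hf : Integrable f) (hR : ∀ x, R < |x| → f x = 0)
    (y : ℝ) : (fun z => cauchyTransform f (z + y * Complex.I)) =O[cobounded ℂ] fun z => z⁻¹ := by
  have shift := (isBigO_cauchyTransform_cobounded hf hR).comp_tendsto
    (tendsto_add_const_cobounded (y * Complex.I : ℂ))
  exact shift.trans (by simpa [sub_neg_eq_add] using! isBigO_inv_sub_cobounded (-(y * Complex.I)))

theorem integral_halfPlanePoissonKernel_mul_cauchyTransform (hf : Integrable f) (hy : 0 < y)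
    (a : ℝ) {s : ℝ} (hs : 0 < s) :
    ∫ t : ℝ, halfPlanePoissonKernel s (t - a) • cauchyTransform f (t + y * Complex.I) =
      cauchyTransform f (a + s * Complex.I + y * Complex.I) :=
  integral_halfPlanePoissonKernel_smul (diffContOnCl_cauchyTransform_add_mul_I hf hy)
    (fun _ hz => norm_cauchyTransform_add_mul_I_le hf hy hz) a hs

end Shift

end CauchyTransform

section HalfPlanePowers

variable {F : ℂ → ℂ} {n : ℕ}

theorem isBigO_pow_of_isBigO_inv {l : Filter ℂ} (hl : l ≤ cobounded ℂ)
    (hdecay : F =O[l] fun z => z⁻¹) (hn : 2 ≤ n) : (fun z => F z ^ n) =O[l] fun z => (z ^ 2)⁻¹ := by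
  refine (hdecay.pow n).trans (.of_bound 1 ?_)
  filter_upwards [hl (eventually_cobounded_le_norm 1)] with z hz
  rw [one_mul, norm_pow, norm_inv, norm_inv, norm_pow, ← inv_pow]
  exact pow_le_pow_of_le_one (by positivity) (inv_le_one_of_one_le₀ hz) hn

theorem integrable_pow_comp_ofReal (hF : DiffContOnCl ℂ F {z : ℂ | 0 < z.im})
    (hdecay : F =O[cobounded ℂ] fun z => z⁻¹) (hn : 2 ≤ n) : Integrable fun t : ℝ => F t ^ n :=
  integrable_comp_ofReal_of_isBigO ⟨hF.1.fun_pow n, hF.2.pow n⟩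
    (isBigO_pow_of_isBigO_inv inf_le_left (hdecay.mono inf_le_left) hn)

theorem integral_pow_comp_ofReal_eq_zero (hF : DiffContOnCl ℂ F {z : ℂ | 0 < z.im})
    (hdecay : F =O[cobounded ℂ] fun z => z⁻¹) (hn : 2 ≤ n) : ∫ t : ℝ, F t ^ n = 0 :=
  integral_comp_ofReal_eq_zero_of_isBigO ⟨hF.1.fun_pow n, hF.2.pow n⟩
    (isBigO_pow_of_isBigO_inv inf_le_left (hdecay.mono inf_le_left) hn)

theorem memLp_two_comp_ofReal (hF : DiffContOnCl ℂ F {z : ℂ | 0 < z.im})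
    (hdecay : F =O[cobounded ℂ] fun z => z⁻¹) : MemLp (fun t : ℝ => F t) 2 := by
  rw [memLp_two_iff_integrable_sq_norm (continuous_comp_ofReal hF).aestronglyMeasurable]
  simpa only [norm_pow] using (integrable_pow_comp_ofReal hF hdecay le_rfl).norm

end HalfPlanePowers

section SquareIntegrable

variable {α : Type*} [MeasurableSpace α] {μ : Measure α}

theorem eLpNorm_two_eq_ofReal_sqrt {E : Type*} [NormedAddCommGroup E] {f : α → E}
    (hf : MemLp f 2 μ) : eLpNorm f 2 μ = ENNReal.ofReal √(∫ x, ‖f x‖ ^ 2 ∂μ) := by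
  rw [hf.eLpNorm_eq_integral_rpow_norm two_ne_zero ENNReal.ofNat_ne_top, Real.sqrt_eq_rpow]
  simp

theorem integral_norm_sq_eq_two_mul_integral_re_sq {w : α → ℂ} (hw : MemLp w 2 μ)
    (hw0 : ∫ x, w x ^ 2 ∂μ = 0) : ∫ x, ‖w x‖ ^ 2 ∂μ = 2 * ∫ x, (w x).re ^ 2 ∂μ := by
  have integrable_sq : Integrable (fun x => w x ^ 2) μ := by
    refine (hw.integrable_norm_pow two_ne_zero).mono' (hw.aestronglyMeasurable.pow 2) ?_
    exact .of_forall fun x => (norm_pow _ 2).le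
  have re_zero : ∫ x, (w x ^ 2).re ∂μ = 0 := by
    simpa [hw0] using integral_re integrable_sq
  have pointwise (x : α) : ‖w x‖ ^ 2 = 2 * (w x).re ^ 2 - (w x ^ 2).re := by
    rw [Complex.sq_norm, Complex.normSq_apply, sq (w x), Complex.mul_re]
    ring
  have integrable_re_sq : Integrable (fun x => (w x).re ^ 2) μ := hw.re.integrable_sq
  have integrable_sq_re : Integrable (fun x => (w x ^ 2).re) μ := integrable_sq.re
  simp only [pointwise]
  rw [integral_sub (integrable_re_sq.const_mul 2) integrable_sq_re, integral_const_mul, re_zero,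
    sub_zero]

theorem eLpNorm_two_eq_sqrt_two_mul_eLpNorm_re {w : α → ℂ} (hw : MemLp w 2 μ)
    (hw0 : ∫ x, w x ^ 2 ∂μ = 0) :
    eLpNorm w 2 μ = ENNReal.ofReal √2 * eLpNorm (fun x => (w x).re) 2 μ := by
  have hre : MemLp (fun x => (w x).re) 2 μ := hw.re
  rw [eLpNorm_two_eq_ofReal_sqrt hw, eLpNorm_two_eq_ofReal_sqrt hre,
    integral_norm_sq_eq_two_mul_integral_re_sq hw hw0, Real.sqrt_mul zero_le_two,
    ENNReal.ofReal_mul (Real.sqrt_nonneg 2)]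
  simp

theorem exists_tendsto_eLpNorm_of_tendsto_re {F : ℕ → α → ℂ} {u : α → ℝ} (hF : ∀ n, MemLp (F n) 2 μ)
    (hsq : ∀ m n, ∫ x, (F m x - F n x) ^ 2 ∂μ = 0) (hu : MemLp u 2 μ)
    (hlim : Tendsto (fun n => eLpNorm (fun x => (F n x).re - u x) 2 μ) atTop (𝓝 0)) :
    ∃ G, MemLp G 2 μ ∧ Tendsto (fun n => eLpNorm (F n - G) 2 μ) atTop (𝓝 0) := by
  have re_cauchy : CauchySeq fun n => (hF n).re.toLp :=
    ((Lp.tendsto_Lp_iff_tendsto_eLpNorm'' _ _ u hu).2 hlim).cauchySeq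
  have dist_eq (m n : ℕ) : dist (hF m).toLp (hF n).toLp =
      √2 * dist (hF m).re.toLp (hF n).re.toLp := by
    rw [dist_edist, dist_edist, Lp.edist_toLp_toLp, Lp.edist_toLp_toLp,
      eLpNorm_two_eq_sqrt_two_mul_eLpNorm_re ((hF m).sub (hF n)) (hsq m n), ENNReal.toReal_mul,
      ENNReal.toReal_ofReal (Real.sqrt_nonneg 2)]
    rfl
  have cauchy : CauchySeq fun n => (hF n).toLp := by
    rw [cauchySeq_iff_tendsto_dist_atTop_0] at re_cauchy ⊢
    simpa only [dist_eq, mul_zero] using re_cauchy.const_mul √2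
  obtain ⟨G, hG⟩ := cauchySeq_tendsto_of_complete cauchy
  refine ⟨G, Lp.memLp G, (Lp.tendsto_Lp_iff_tendsto_eLpNorm'' _ hF _ (Lp.memLp G)).1 ?_⟩
  rwa [Lp.toLp_coeFn]

theorem tendsto_integral_smul_of_tendsto_eLpNorm_two {E : Type*} [NormedAddCommGroup E]
    [NormedSpace ℝ E] {ι : Type*} {l : Filter ι} {K : α → ℝ} {F : ι → α → E} {G : α → E}
    (hK : MemLp K 2 μ) (hF : ∀ i, MemLp (F i) 2 μ) (hG : MemLp G 2 μ)
    (hlim : Tendsto (fun i => eLpNorm (F i - G) 2 μ) l (𝓝 0)) :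
    Tendsto (fun i => ∫ x, K x • F i x ∂μ) l (𝓝 (∫ x, K x • G x ∂μ)) := by
  refine tendsto_integral_of_L1' _
    (hK.aestronglyMeasurable.smul hG.aestronglyMeasurable)
    (.of_forall fun i => memLp_one_iff_integrable.1 ((hF i).smul (p := 2) (q := 2) hK)) ?_
  have holder (i : ι) : eLpNorm (fun x => K x • F i x - K x • G x) 1 μ ≤
      eLpNorm K 2 μ * eLpNorm (F i - G) 2 μ := by
    simp only [← smul_sub]
    exact eLpNorm_smul_le_mul_eLpNorm ((hF i).sub hG).aestronglyMeasurable hK.aestronglyMeasurable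
  refine tendsto_of_tendsto_of_tendsto_of_le_of_le tendsto_const_nhds ?_ (fun _ => zero_le) holder
  simpa using ENNReal.Tendsto.const_mul hlim (.inr hK.eLpNorm_ne_top)

theorem tendsto_eLpNorm_one_sq_sub_sq {ι : Type*} {l : Filter ι} {v : ι → α → ℝ} {h : α → ℝ}
    (hv : ∀ i, MemLp (v i) 2 μ) (hh : MemLp h 2 μ)
    (hlim : Tendsto (fun i => eLpNorm (v i - h) 2 μ) l (𝓝 0)) :
    Tendsto (fun i => eLpNorm (fun x => v i x ^ 2 - h x ^ 2) 1 μ) l (𝓝 0) := by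
  have holder (i : ι) : eLpNorm (fun x => v i x ^ 2 - h x ^ 2) 1 μ ≤
      eLpNorm (v i - h) 2 μ * (eLpNorm (v i - h) 2 μ + eLpNorm ((2 : ℝ) • h) 2 μ) := by
    have hd := (hv i).sub hh
    have factor : (fun x => v i x ^ 2 - h x ^ 2) = (v i - h) • (v i - h + (2 : ℝ) • h) := by
      ext x
      simp only [Pi.smul_apply', Pi.sub_apply, Pi.add_apply, Pi.smul_apply, smul_eq_mul]
      ring
    rw [factor]
    refine (eLpNorm_smul_le_mul_eLpNorm (p := 2) (q := 2)
      (hd.add (hh.const_smul 2)).aestronglyMeasurable hd.aestronglyMeasurable).trans ?_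
    gcongr
    exact eLpNorm_add_le hd.aestronglyMeasurable (hh.const_smul 2).aestronglyMeasurable one_le_two
  refine tendsto_of_tendsto_of_tendsto_of_le_of_le tendsto_const_nhds ?_ (fun _ => zero_le) holder
  simpa using ENNReal.Tendsto.mul hlim (.inr (by simpa using (hh.const_smul 2).eLpNorm_ne_top))
    (hlim.add_const (eLpNorm ((2 : ℝ) • h) 2 μ)) (.inr ENNReal.zero_ne_top)

theorem tendsto_integral_mul_of_tendsto_eLpNorm_one {u g : ℕ → α → ℝ} {φ k : α → ℝ} {B : ℝ}
    (hum : ∀ n, AEStronglyMeasurable (u n) μ) (huB : ∀ n x, ‖u n x‖ ≤ B)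
    (hu : ∀ᵐ x ∂μ, Tendsto (fun n => u n x) atTop (𝓝 (φ x)))
    (hg : ∀ n, Integrable (g n) μ) (hk : Integrable k μ)
    (hlim : Tendsto (fun n => eLpNorm (fun x => g n x - k x) 1 μ) atTop (𝓝 0)) :
    Tendsto (fun n => ∫ x, u n x * g n x ∂μ) atTop (𝓝 (∫ x, φ x * k x ∂μ)) := by
  have error_tendsto : Tendsto (fun n => ∫ x, u n x * (g n x - k x) ∂μ) atTop (𝓝 0) := by
    have bound (n : ℕ) : ‖∫ x, u n x * (g n x - k x) ∂μ‖ₑ ≤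
        ENNReal.ofReal B * eLpNorm (fun x => g n x - k x) 1 μ := by
      rw [eLpNorm_one_eq_lintegral_enorm,
        ← lintegral_const_mul' _ _ ENNReal.ofReal_ne_top]
      refine (enorm_integral_le_lintegral_enorm _).trans (lintegral_mono fun x => ?_)
      rw [enorm_mul, ← ofReal_norm (u n x)]
      gcongr
      exact huB n x
    rw [tendsto_zero_iff_enorm_tendsto_zero]
    refine tendsto_of_tendsto_of_tendsto_of_le_of_le tendsto_const_nhds ?_ (fun _ => zero_le) bound
    simpa using ENNReal.Tendsto.const_mul hlim (.inr ENNReal.ofReal_ne_top)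
  have integrable_mul (n : ℕ) {f : α → ℝ} (hf : Integrable f μ) :
      Integrable (fun x => u n x * f x) μ := hf.bdd_mul (hum n) (.of_forall (huB n))
  have main_tendsto : Tendsto (fun n => ∫ x, u n x * k x ∂μ) atTop (𝓝 (∫ x, φ x * k x ∂μ)) := by
    refine tendsto_integral_of_dominated_convergence (fun x => B * ‖k x‖)
      (fun n => (integrable_mul n hk).aestronglyMeasurable) (hk.norm.const_mul B)
      (fun n => .of_forall fun x => ?_) (hu.mono fun x hx => hx.mul_const _)
    rw [norm_mul]
    gcongr
    exact huB n x
  have split (n : ℕ) : ∫ x, u n x * (g n x - k x) ∂μ =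
      ∫ x, u n x * g n x ∂μ - ∫ x, u n x * k x ∂μ := by
    simp only [mul_sub]
    exact integral_sub (integrable_mul n (hg n)) (integrable_mul n hk)
  simpa only [split, sub_add_cancel, zero_add] using error_tendsto.add main_tendsto

theorem tendsto_integral_mul_sq {u v : ℕ → α → ℝ} {φ h : α → ℝ} {B : ℝ}
    (hum : ∀ n, AEStronglyMeasurable (u n) μ) (huB : ∀ n x, ‖u n x‖ ≤ B)
    (hu : ∀ᵐ x ∂μ, Tendsto (fun n => u n x) atTop (𝓝 (φ x)))
    (hv : ∀ n, MemLp (v n) 2 μ) (hh : MemLp h 2 μ)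
    (hlim : Tendsto (fun n => eLpNorm (v n - h) 2 μ) atTop (𝓝 0)) :
    Tendsto (fun n => ∫ x, u n x * v n x ^ 2 ∂μ) atTop (𝓝 (∫ x, φ x * h x ^ 2 ∂μ)) :=
  tendsto_integral_mul_of_tendsto_eLpNorm_one hum huB hu (fun n => (hv n).integrable_sq)
    hh.integrable_sq (tendsto_eLpNorm_one_sq_sub_sq hv hh hlim)

end SquareIntegrable

/-- The Poisson integral of `φ`, that is, the value at `t + i s` of its harmonic extension to the
upper half-plane. -/
noncomputable def poissonIntegral (φ : ℝ → ℝ) (s t : ℝ) : ℝ :=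
  ∫ x, halfPlanePoissonKernel s (x - t) * φ x

section PoissonIntegral

variable {φ : ℝ → ℝ} {B s : ℝ}

theorem integrable_halfPlanePoissonKernel_sub_mul (hφ : Integrable φ) (hs : 0 < s) (t : ℝ) :
    Integrable fun x => halfPlanePoissonKernel s (x - t) * φ x :=
  integrable_comp_sub_smul_of_bounded hφ (measurable_halfPlanePoissonKernel s)
    (abs_halfPlanePoissonKernel_le hs) t

theorem re_cauchyTransform_ofReal (hφ : Integrable φ) (t : ℝ) (hs : 0 < s) :
    (cauchyTransform (fun x => (φ x : ℂ)) (t + s * Complex.I)).re = poissonIntegral φ s t := by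
  rw [cauchyTransform_add_mul_I (hφ.ofReal : Integrable fun x => (φ x : ℂ)) t hs, poissonIntegral]
  simp only [Complex.real_smul, ← Complex.ofReal_mul, integral_complex_ofReal, Complex.sub_re,
    Complex.ofReal_re, Complex.mul_re, Complex.I_re, Complex.I_im, Complex.ofReal_im, zero_mul,
    mul_zero, sub_zero]

theorem abs_poissonIntegral_le (hB : ∀ x, |φ x| ≤ B) (hs : 0 < s) (t : ℝ) :
    |poissonIntegral φ s t| ≤ B := by
  have kernel := (integrable_halfPlanePoissonKernel hs).comp_sub_right t
  calc |poissonIntegral φ s t| ≤ ∫ x, halfPlanePoissonKernel s (x - t) * B := by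
        rw [← Real.norm_eq_abs]
        refine norm_integral_le_of_norm_le (kernel.mul_const B) (.of_forall fun x => ?_)
        rw [norm_mul, Real.norm_of_nonneg (halfPlanePoissonKernel_nonneg hs _)]
        exact mul_le_mul_of_nonneg_left (hB x) (halfPlanePoissonKernel_nonneg hs _)
    _ = B := by
        rw [integral_mul_const, integral_sub_right_eq_self (halfPlanePoissonKernel s) t,
          integral_halfPlanePoissonKernel hs, one_mul]

theorem poissonIntegral_sq_le (hφ : Integrable φ) (hφ2 : Integrable fun x => φ x ^ 2) (hs : 0 < s)
    (t : ℝ) : poissonIntegral φ s t ^ 2 ≤ poissonIntegral (fun x => φ x ^ 2) s t := by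
  set c := poissonIntegral φ s t with hc
  have kernel := (integrable_halfPlanePoissonKernel hs).comp_sub_right t
  have first_moment := (integrable_halfPlanePoissonKernel_sub_mul hφ hs t).const_mul (2 * c)
  have second_moment := integrable_halfPlanePoissonKernel_sub_mul hφ2 hs t
  have linear : Integrable fun x => 2 * c * (halfPlanePoissonKernel s (x - t) * φ x) -
      c ^ 2 * halfPlanePoissonKernel s (x - t) := first_moment.sub (kernel.const_mul _)
  have variance : ∫ x, halfPlanePoissonKernel s (x - t) * (φ x - c) ^ 2 =
      poissonIntegral (fun x => φ x ^ 2) s t - c ^ 2 := by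
    have expand (x : ℝ) : halfPlanePoissonKernel s (x - t) * (φ x - c) ^ 2 =
        halfPlanePoissonKernel s (x - t) * φ x ^ 2 -
          (2 * c * (halfPlanePoissonKernel s (x - t) * φ x) -
            c ^ 2 * halfPlanePoissonKernel s (x - t)) := by ring
    simp only [expand]
    rw [integral_sub second_moment linear, integral_sub first_moment (kernel.const_mul _),
      integral_const_mul, integral_const_mul,
      integral_sub_right_eq_self (halfPlanePoissonKernel s) t, integral_halfPlanePoissonKernel hs,
      ← poissonIntegral, ← poissonIntegral, ← hc]
    ring
  refine sub_nonneg.1 (variance ▸ integral_nonneg fun x => ?_)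
  exact mul_nonneg (halfPlanePoissonKernel_nonneg hs _) (sq_nonneg _)

theorem poissonIntegral_eq_convolution (φ : ℝ → ℝ) (s : ℝ) :
    poissonIntegral φ s =
      convolution φ (halfPlanePoissonKernel s) (ContinuousLinearMap.lsmul ℝ ℝ) volume := by
  ext t
  simp only [poissonIntegral, convolution, halfPlanePoissonKernel_sub_comm s t,
    ContinuousLinearMap.lsmul_apply, smul_eq_mul, mul_comm]

theorem integrable_poissonIntegral (hφ : Integrable φ) (hs : 0 < s) :
    Integrable (poissonIntegral φ s) :=
  poissonIntegral_eq_convolution φ s ▸ hφ.integrable_convolution _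
    (integrable_halfPlanePoissonKernel hs)

theorem integral_poissonIntegral (hφ : Integrable φ) (hs : 0 < s) :
    ∫ t, poissonIntegral φ s t = ∫ x, φ x := by
  rw [poissonIntegral_eq_convolution, integral_convolution _ hφ
    (integrable_halfPlanePoissonKernel hs), integral_halfPlanePoissonKernel hs,
    ContinuousLinearMap.lsmul_apply, smul_eq_mul, mul_one]

theorem tendsto_poissonIntegral {t : ℝ} (hφ : AEStronglyMeasurable φ)
    (ht : IsPoissonLebesguePoint φ t) :
    Tendsto (fun s => poissonIntegral φ s t) (𝓝[>] 0) (𝓝 (φ t)) :=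
  ht.tendsto_integral_halfPlanePoissonKernel_smul hφ

theorem integrable_sq_of_bounded (hφ : Integrable φ) (hB : ∀ x, |φ x| ≤ B) :
    Integrable fun x => φ x ^ 2 := by
  simpa only [sq] using hφ.bdd_mul hφ.aestronglyMeasurable (.of_forall hB)

theorem memLp_two_of_bounded (hφ : Integrable φ) (hB : ∀ x, |φ x| ≤ B) : MemLp φ 2 :=
  (memLp_two_iff_integrable_sq hφ.aestronglyMeasurable).2 (integrable_sq_of_bounded hφ hB)

theorem tendsto_integral_poissonIntegral_mul (hφ : Integrable φ) (hB : ∀ x, |φ x| ≤ B) :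
    Tendsto (fun s => ∫ t, poissonIntegral φ s t * φ t) (𝓝[>] 0) (𝓝 (∫ t, φ t ^ 2)) := by
  refine tendsto_integral_filter_of_dominated_convergence (fun t => B * ‖φ t‖) ?_ ?_
    (hφ.norm.const_mul B) ?_
  · filter_upwards [self_mem_nhdsWithin] with s hs
    exact (integrable_poissonIntegral hφ hs).aestronglyMeasurable.mul hφ.aestronglyMeasurable
  · filter_upwards [self_mem_nhdsWithin] with s hs
    refine .of_forall fun t => ?_
    rw [norm_mul]
    gcongr
    exact abs_poissonIntegral_le hB hs t
  · filter_upwards [ae_isPoissonLebesguePoint le_rfl (memLp_one_iff_integrable.2 hφ)] with t ht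
    rw [sq]
    exact (tendsto_poissonIntegral hφ.aestronglyMeasurable ht).mul_const (φ t)

theorem integral_poissonIntegral_sub_sq_le (hφ : Integrable φ) (hB : ∀ x, |φ x| ≤ B)
    (hs : 0 < s) : ∫ t, (poissonIntegral φ s t - φ t) ^ 2 ≤
      2 * (∫ t, φ t ^ 2) - 2 * ∫ t, poissonIntegral φ s t * φ t := by
  have hφ2 := integrable_sq_of_bounded hφ hB
  have hu := integrable_poissonIntegral hφ hs
  have hu2 := integrable_sq_of_bounded hu (abs_poissonIntegral_le hB hs)
  have huφ : Integrable fun t => poissonIntegral φ s t * φ t :=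
    hφ.bdd_mul hu.aestronglyMeasurable (.of_forall (abs_poissonIntegral_le hB hs))
  have mixed : Integrable fun t => 2 * (poissonIntegral φ s t * φ t) - φ t ^ 2 :=
    (huφ.const_mul 2).sub hφ2
  have contraction : ∫ t, poissonIntegral φ s t ^ 2 ≤ ∫ t, φ t ^ 2 :=
    (integral_mono hu2 (integrable_poissonIntegral hφ2 hs)
      (poissonIntegral_sq_le hφ hφ2 hs)).trans_eq (integral_poissonIntegral hφ2 hs)
  have expand (t : ℝ) : (poissonIntegral φ s t - φ t) ^ 2 =
      poissonIntegral φ s t ^ 2 - (2 * (poissonIntegral φ s t * φ t) - φ t ^ 2) := by ring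
  simp only [expand]
  rw [integral_sub hu2 mixed, integral_sub (huφ.const_mul 2) hφ2, integral_const_mul]
  linarith

theorem tendsto_eLpNorm_poissonIntegral_sub (hφ : Integrable φ) (hB : ∀ x, |φ x| ≤ B) :
    Tendsto (fun s => eLpNorm (fun t => poissonIntegral φ s t - φ t) 2) (𝓝[>] 0) (𝓝 0) := by
  have sq_tendsto : Tendsto (fun s => ∫ t, (poissonIntegral φ s t - φ t) ^ 2) (𝓝[>] 0) (𝓝 0) := by
    refine tendsto_of_tendsto_of_tendsto_of_le_of_le' tendsto_const_nhds ?_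
      (.of_forall fun s => integral_nonneg fun t => sq_nonneg _)
      (eventually_mem_nhdsWithin.mono fun s hs => integral_poissonIntegral_sub_sq_le hφ hB hs)
    have := ((tendsto_integral_poissonIntegral_mul hφ hB).const_mul 2).const_sub
      (2 * ∫ t, φ t ^ 2)
    rwa [sub_self] at this
  have sqrt_tendsto : Tendsto (fun s => ENNReal.ofReal √(∫ t, (poissonIntegral φ s t - φ t) ^ 2))
      (𝓝[>] 0) (𝓝 0) := by
    simpa using ENNReal.tendsto_ofReal sq_tendsto.sqrt
  refine sqrt_tendsto.congr' (eventually_mem_nhdsWithin.mono fun s hs => ?_)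
  have memLp : MemLp (fun t => poissonIntegral φ s t - φ t) 2 :=
    (memLp_two_of_bounded (integrable_poissonIntegral hφ hs) (abs_poissonIntegral_le hB hs)).sub
      (memLp_two_of_bounded hφ hB)
  simp only [eLpNorm_two_eq_ofReal_sqrt memLp, Real.norm_eq_abs, sq_abs]

end PoissonIntegral

section FiniteHilbertTransform

variable {f : ℝ → ℂ}

theorem pi_inv_mul_div_eq_truncatedHilbertKernel_smul {t ε x : ℝ} (hx : ε < |x - t|) :
    (π : ℂ)⁻¹ * (f x / (x - t)) = truncatedHilbertKernel ε (x - t) • f x := by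
  rw [truncatedHilbertKernel, if_pos hx, Complex.real_smul]
  push_cast
  rw [mul_inv]
  ring

theorem pi_inv_mul_integral_add_integral_eq (hf : Integrable f)
    (hsupp : ∀ x ∉ Ioo (-1 : ℝ) 1, f x = 0) (t : ℝ) {ε : ℝ} (hε : 0 < ε) :
    (π : ℂ)⁻¹ * ((∫ x in Ioo (-1 : ℝ) (t - ε), f x / ((x : ℂ) - (t : ℂ))) +
      ∫ x in Ioo (t + ε) (1 : ℝ), f x / ((x : ℂ) - (t : ℂ))) =
    ∫ x, truncatedHilbertKernel ε (x - t) • f x := by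
  have integrable := integrable_comp_sub_smul_of_bounded hf (measurable_truncatedHilbertKernel ε)
    (abs_truncatedHilbertKernel_le hε) t
  have left : EqOn (fun x : ℝ => (π : ℂ)⁻¹ * (f x / (x - t)))
      (fun x => truncatedHilbertKernel ε (x - t) • f x) (Ioo (-1) (t - ε)) := fun x hx =>
    pi_inv_mul_div_eq_truncatedHilbertKernel_smul (lt_abs.2 (.inr (by linarith [hx.2])))
  have right : EqOn (fun x : ℝ => (π : ℂ)⁻¹ * (f x / (x - t)))
      (fun x => truncatedHilbertKernel ε (x - t) • f x) (Ioo (t + ε) 1) := fun x hx =>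
    pi_inv_mul_div_eq_truncatedHilbertKernel_smul (lt_abs.2 (.inl (by linarith [hx.1])))
  have disjoint : Disjoint (Ioo (-1) (t - ε)) (Ioo (t + ε) 1) :=
    disjoint_left.2 fun x hl hr => by linarith [hl.2, hr.1]
  rw [mul_add, ← integral_const_mul, ← integral_const_mul,
    setIntegral_congr_fun measurableSet_Ioo left, setIntegral_congr_fun measurableSet_Ioo right,
    ← setIntegral_union disjoint measurableSet_Ioo integrable.integrableOn integrable.integrableOn]
  refine setIntegral_eq_integral_of_forall_compl_eq_zero fun x hx => ?_
  by_cases hx1 : x ∈ Ioo (-1 : ℝ) 1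
  · rw [truncatedHilbertKernel, if_neg, zero_smul]
    intro hεx
    rcases lt_abs.1 hεx with h | h
    · exact hx (.inr ⟨by linarith, hx1.2⟩)
    · exact hx (.inl ⟨hx1.1, by linarith⟩)
  · rw [hsupp x hx1, smul_zero]

theorem fht_eq_of_tendsto_cauchyTransform (hf : Integrable f)
    (hsupp : ∀ x ∉ Ioo (-1 : ℝ) 1, f x = 0) {t : ℝ} (ht : IsPoissonLebesguePoint f t) {g : ℂ}
    (hg : Tendsto (fun s : ℝ => cauchyTransform f (t + s * Complex.I)) (𝓝[>] 0) (𝓝 g)) :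
    fht f t = Complex.I * (g - f t) := by
  have poisson := ht.tendsto_integral_halfPlanePoissonKernel_smul hf.aestronglyMeasurable
  have truncation_error := ht.tendsto_integral_smul hf.aestronglyMeasurable
    (fun s => (measurable_conjPoissonKernel s).sub (measurable_truncatedHilbertKernel s))
    (fun s hs u => abs_conjPoissonKernel_sub_truncatedHilbertKernel_le hs u)
    fun s _ => integral_conjPoissonKernel_sub_truncatedHilbertKernel s
  have limit := ((hg.sub poisson).const_mul Complex.I).sub truncation_error
  rw [zero_smul, sub_zero] at limit
  refine Tendsto.limUnder_eq (limit.congr' (eventually_mem_nhdsWithin.mono fun s hs => ?_))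
  have hs : 0 < s := hs
  have conj_integrable := integrable_comp_sub_smul_of_bounded hf (measurable_conjPoissonKernel s)
    (abs_conjPoissonKernel_le hs) t
  have truncated_integrable := integrable_comp_sub_smul_of_bounded hf
    (measurable_truncatedHilbertKernel s) (abs_truncatedHilbertKernel_le hs) t
  beta_reduce
  simp only [Pi.sub_apply, sub_smul]
  rw [pi_inv_mul_integral_add_integral_eq hf hsupp t hs, cauchyTransform_add_mul_I hf t hs,
    integral_sub conj_integrable truncated_integrable]
  linear_combination (-∫ x, conjPoissonKernel s (x - t) • f x) * Complex.I_sq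

end FiniteHilbertTransform

section BoundaryValue

variable {f : ℝ → ℂ} {R : ℝ}

theorem memLp_two_cauchyTransform_add_mul_I (hf : Integrable f) (hR : ∀ x, R < |x| → f x = 0)
    {y : ℝ} (hy : 0 < y) : MemLp (fun t : ℝ => cauchyTransform f (t + y * Complex.I)) 2 :=
  memLp_two_comp_ofReal (diffContOnCl_cauchyTransform_add_mul_I hf hy)
    (isBigO_cauchyTransform_add_mul_I hf hR y)

theorem integral_sq_cauchyTransform_sub_eq_zero (hf : Integrable f) (hR : ∀ x, R < |x| → f x = 0)
    {y y' : ℝ} (hy : 0 < y) (hy' : 0 < y') :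
    ∫ t : ℝ, (cauchyTransform f (t + y * Complex.I) - cauchyTransform f (t + y' * Complex.I)) ^ 2 =
      0 :=
  integral_pow_comp_ofReal_eq_zero (F := fun z =>
      cauchyTransform f (z + y * Complex.I) - cauchyTransform f (z + y' * Complex.I))
    ((diffContOnCl_cauchyTransform_add_mul_I hf hy).sub
      (diffContOnCl_cauchyTransform_add_mul_I hf hy'))
    ((isBigO_cauchyTransform_add_mul_I hf hR y).sub (isBigO_cauchyTransform_add_mul_I hf hR y'))
    le_rfl

variable {y : ℕ → ℝ} {G : ℝ → ℂ}

theorem integral_halfPlanePoissonKernel_smul_boundaryValue (hf : Integrable f)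
    (hR : ∀ x, R < |x| → f x = 0) (hy : ∀ n, 0 < y n) (hy0 : Tendsto y atTop (𝓝 0))
    (hG : MemLp G 2) (hlim : Tendsto (fun n =>
      eLpNorm ((fun t : ℝ => cauchyTransform f (t + y n * Complex.I)) - G) 2) atTop (𝓝 0))
    (a : ℝ) {s : ℝ} (hs : 0 < s) :
    ∫ t, halfPlanePoissonKernel s (t - a) • G t = cauchyTransform f (a + s * Complex.I) := by
  have kernel : MemLp (fun t => halfPlanePoissonKernel s (t - a)) 2 :=
    (memLp_halfPlanePoissonKernel hs).comp_measurePreserving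
      (measurePreserving_sub_right volume a)
  have integrals := tendsto_integral_smul_of_tendsto_eLpNorm_two kernel
    (fun n => memLp_two_cauchyTransform_add_mul_I hf hR (hy n)) hG hlim
  simp only [fun n => integral_halfPlanePoissonKernel_mul_cauchyTransform hf (hy n) a hs]
    at integrals
  refine tendsto_nhds_unique integrals ?_
  have continuousAt : ContinuousAt (cauchyTransform f) (a + s * Complex.I) :=
    ((differentiableOn_cauchyTransform hf).differentiableAt
      ((isOpen_lt continuous_const Complex.continuous_im).mem_nhds
        (by simpa using hs))).continuousAt
  have shift : Continuous fun r : ℝ => (a + s * Complex.I + r * Complex.I : ℂ) := by fun_prop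
  exact continuousAt.tendsto.comp ((shift.tendsto' 0 _ (by simp)).comp hy0)

theorem ae_tendsto_cauchyTransform (hf : Integrable f)
    (hR : ∀ x, R < |x| → f x = 0) (hy : ∀ n, 0 < y n) (hy0 : Tendsto y atTop (𝓝 0))
    (hG : MemLp G 2) (hlim : Tendsto (fun n =>
      eLpNorm ((fun t : ℝ => cauchyTransform f (t + y n * Complex.I)) - G) 2) atTop (𝓝 0)) :
    ∀ᵐ t : ℝ, Tendsto (fun s : ℝ => cauchyTransform f (t + s * Complex.I)) (𝓝[>] 0) (𝓝 (G t)) := by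
  filter_upwards [ae_isPoissonLebesguePoint one_le_two hG] with t ht
  exact (ht.tendsto_integral_halfPlanePoissonKernel_smul hG.aestronglyMeasurable).congr'
    (eventually_mem_nhdsWithin.mono fun s hs =>
    integral_halfPlanePoissonKernel_smul_boundaryValue hf hR hy hy0 hG hlim t hs)

end BoundaryValue

section RealBoundaryValue

variable {φ : ℝ → ℝ} {B R : ℝ}

theorem exists_tendsto_eLpNorm_cauchyTransform_sub (hφ : Integrable φ) (hB : ∀ x, |φ x| ≤ B)
    (hR : ∀ x, R < |x| → φ x = 0) {y : ℕ → ℝ} (hy : ∀ n, 0 < y n) (hy0 : Tendsto y atTop (𝓝 0)) :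
    ∃ G : ℝ → ℂ, MemLp G 2 ∧ Tendsto (fun n => eLpNorm ((fun t : ℝ =>
      cauchyTransform (fun x => (φ x : ℂ)) (t + y n * Complex.I)) - G) 2) atTop (𝓝 0) := by
  have hφc : Integrable fun x => (φ x : ℂ) := hφ.ofReal
  have hRc (x : ℝ) (hx : R < |x|) : (φ x : ℂ) = 0 := by rw [hR x hx, Complex.ofReal_zero]
  refine exists_tendsto_eLpNorm_of_tendsto_re
    (fun n => memLp_two_cauchyTransform_add_mul_I hφc hRc (hy n))
    (fun m n => integral_sq_cauchyTransform_sub_eq_zero hφc hRc (hy m) (hy n))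
    (memLp_two_of_bounded hφ hB) ?_
  simp only [fun n t => re_cauchyTransform_ofReal hφ t (hy n)]
  exact (tendsto_eLpNorm_poissonIntegral_sub hφ hB).comp
    (tendsto_nhdsWithin_iff.2 ⟨hy0, .of_forall hy⟩)

theorem re_eq_of_tendsto_cauchyTransform (hφ : Integrable φ) {t : ℝ}
    (ht : IsPoissonLebesguePoint φ t) {g : ℂ} (hg : Tendsto (fun s : ℝ =>
      cauchyTransform (fun x => (φ x : ℂ)) (t + s * Complex.I)) (𝓝[>] 0) (𝓝 g)) : g.re = φ t := by
  refine tendsto_nhds_unique ((Complex.continuous_re.tendsto g).comp hg) ?_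
  exact (tendsto_poissonIntegral hφ.aestronglyMeasurable ht).congr'
    (eventually_mem_nhdsWithin.mono fun s hs => (re_cauchyTransform_ofReal hφ t hs).symm)

theorem integral_re_pow_three_cauchyTransform (hφ : Integrable φ) (hB : ∀ x, |φ x| ≤ B)
    (hR : ∀ x, R < |x| → φ x = 0) {y : ℝ} (hy : 0 < y) {F : ℝ → ℂ}
    (hF : ∀ t : ℝ, F t = cauchyTransform (fun x => (φ x : ℂ)) (t + y * Complex.I)) :
    ∫ t, (F t).re * (F t).re ^ 2 = 3 * ∫ t, (F t).re * (F t).im ^ 2 := by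
  have hφc : Integrable fun x => (φ x : ℂ) := hφ.ofReal
  have hRc (x : ℝ) (hx : R < |x|) : (φ x : ℂ) = 0 := by rw [hR x hx, Complex.ofReal_zero]
  have hFLp : MemLp F 2 := funext hF ▸ memLp_two_cauchyTransform_add_mul_I hφc hRc hy
  have hre : MemLp (fun t => (F t).re) 2 := hFLp.re
  have him : MemLp (fun t => (F t).im) 2 := hFLp.im
  have re_bound (t : ℝ) : ‖(F t).re‖ ≤ B := by
    rw [hF, re_cauchyTransform_ofReal hφ t hy]
    exact abs_poissonIntegral_le hB hy t
  have integrable_re_mul {v : ℝ → ℝ} (hv : MemLp v 2) : Integrable fun t => (F t).re * v t ^ 2 :=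
    hv.integrable_sq.bdd_mul hre.aestronglyMeasurable (.of_forall re_bound)
  have cube_re (w : ℂ) : (w ^ 3).re = w.re * w.re ^ 2 - 3 * (w.re * w.im ^ 2) := by
    simp only [pow_succ, pow_zero, one_mul, Complex.mul_re, Complex.mul_im]
    ring
  have cube_integrable : Integrable fun t => F t ^ 3 := by
    simpa only [hF] using! integrable_pow_comp_ofReal
      (diffContOnCl_cauchyTransform_add_mul_I hφc hy)
      (isBigO_cauchyTransform_add_mul_I hφc hRc y) (by norm_num : 2 ≤ 3)
  have cube_integral : ∫ t, F t ^ 3 = 0 := by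
    simpa only [hF] using! integral_pow_comp_ofReal_eq_zero
      (diffContOnCl_cauchyTransform_add_mul_I hφc hy)
      (isBigO_cauchyTransform_add_mul_I hφc hRc y) (by norm_num : 2 ≤ 3)
  have re_integral : ∫ t, (F t ^ 3).re = 0 := by
    rw [← Complex.zero_re, ← cube_integral]
    exact integral_re cube_integrable
  simp only [cube_re] at re_integral
  rw [integral_sub (integrable_re_mul hre) ((integrable_re_mul him).const_mul 3),
    integral_const_mul] at re_integral
  exact sub_eq_zero.1 re_integral

theorem integral_pow_three_eq_of_tendsto (hφ : Integrable φ) (hB : ∀ x, |φ x| ≤ B)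
    (hR : ∀ x, R < |x| → φ x = 0) {y : ℕ → ℝ} (hy : ∀ n, 0 < y n) (hy0 : Tendsto y atTop (𝓝 0))
    {G : ℝ → ℂ} (hG : MemLp G 2) (hlim : Tendsto (fun n => eLpNorm ((fun t : ℝ =>
      cauchyTransform (fun x => (φ x : ℂ)) (t + y n * Complex.I)) - G) 2) atTop (𝓝 0)) :
    ∫ t, φ t ^ 3 = 3 * ∫ t, φ t * (G t).im ^ 2 := by
  have hφc : Integrable fun x => (φ x : ℂ) := hφ.ofReal
  have hRc (x : ℝ) (hx : R < |x|) : (φ x : ℂ) = 0 := by rw [hR x hx, Complex.ofReal_zero]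
  have hy0' : Tendsto y atTop (𝓝[>] 0) := tendsto_nhdsWithin_iff.2 ⟨hy0, .of_forall hy⟩
  let F (n : ℕ) (t : ℝ) : ℂ := cauchyTransform (fun x => (φ x : ℂ)) (t + y n * Complex.I)
  have hF (n : ℕ) : MemLp (F n) 2 := memLp_two_cauchyTransform_add_mul_I hφc hRc (hy n)
  have re_eq (n : ℕ) : (fun t => (F n t).re) = poissonIntegral φ (y n) :=
    funext fun t => re_cauchyTransform_ofReal hφ t (hy n)
  have re_bound (n : ℕ) (t : ℝ) : ‖(F n t).re‖ ≤ B :=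
    (congr_fun (re_eq n) t).symm ▸ abs_poissonIntegral_le hB (hy n) t
  have re_tendsto : ∀ᵐ t, Tendsto (fun n => (F n t).re) atTop (𝓝 (φ t)) := by
    filter_upwards [ae_isPoissonLebesguePoint le_rfl (memLp_one_iff_integrable.2 hφ)] with t ht
    exact ((tendsto_poissonIntegral hφ.aestronglyMeasurable ht).comp hy0').congr
      fun n => (congr_fun (re_eq n) t).symm
  have re_tendsto_eLpNorm :
      Tendsto (fun n => eLpNorm ((fun t => (F n t).re) - φ) 2) atTop (𝓝 0) := by
    simp only [re_eq]
    exact (tendsto_eLpNorm_poissonIntegral_sub hφ hB).comp hy0'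
  have im_tendsto_eLpNorm :
      Tendsto (fun n => eLpNorm ((fun t => (F n t).im) - fun t => (G t).im) 2) atTop (𝓝 0) :=
    tendsto_of_tendsto_of_tendsto_of_le_of_le tendsto_const_nhds hlim (fun _ => zero_le)
      fun n => eLpNorm_mono fun t => Complex.abs_im_le_norm (F n t - G t)
  have re_cube := tendsto_integral_mul_sq (fun n => (hF n).re.aestronglyMeasurable) re_bound
    re_tendsto (fun n => (hF n).re) (memLp_two_of_bounded hφ hB) re_tendsto_eLpNorm
  have re_mul_im_sq := tendsto_integral_mul_sq (fun n => (hF n).re.aestronglyMeasurable) re_bound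
    re_tendsto (fun n => (hF n).im) hG.im im_tendsto_eLpNorm
  have cauchy (n : ℕ) := integral_re_pow_three_cauchyTransform hφ hB hR (hy n) fun t => rfl
  simp only [pow_succ' _ 2]
  exact tendsto_nhds_unique (re_cube.congr cauchy) (re_mul_im_sq.const_mul 3)

theorem exists_ae_fht_eq_and_integral_pow_three_eq (hφ : Integrable φ) (hB : ∀ x, |φ x| ≤ B)
    (hsupp : ∀ x ∉ Ioo (-1 : ℝ) 1, φ x = 0) :
    ∃ h : ℝ → ℝ, MemLp h 2 ∧ (∀ᵐ t, fht (fun x => (φ x : ℂ)) t = h t) ∧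
      ∫ t, φ t ^ 3 = 3 * ∫ t, φ t * h t ^ 2 := by
  have hφc : Integrable fun x => (φ x : ℂ) := hφ.ofReal
  have hsuppc (x : ℝ) (hx : x ∉ Ioo (-1 : ℝ) 1) : (φ x : ℂ) = 0 := by
    rw [hsupp x hx, Complex.ofReal_zero]
  have not_mem (x : ℝ) (hx : 1 < |x|) : x ∉ Ioo (-1 : ℝ) 1 := fun h => hx.not_gt (abs_lt.2 h)
  have height_pos (n : ℕ) : 0 < 1 / ((n : ℝ) + 1) := Nat.one_div_pos_of_nat
  have height_tendsto := tendsto_one_div_add_atTop_nhds_zero_nat (𝕜 := ℝ)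
  obtain ⟨G, hG, hlim⟩ := exists_tendsto_eLpNorm_cauchyTransform_sub hφ hB
    (fun x hx => hsupp x (not_mem x hx)) height_pos height_tendsto
  refine ⟨fun t => -(G t).im, hG.im.neg, ?_, ?_⟩
  · filter_upwards [ae_isPoissonLebesguePoint le_rfl (memLp_one_iff_integrable.2 hφ),
      ae_isPoissonLebesguePoint le_rfl (memLp_one_iff_integrable.2 hφc),
      ae_tendsto_cauchyTransform hφc (fun x hx => hsuppc x (not_mem x hx)) height_pos
        height_tendsto hG hlim] with t ht htc hg
    rw [fht_eq_of_tendsto_cauchyTransform hφc hsuppc htc hg]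
    apply Complex.ext <;> simp [re_eq_of_tendsto_cauchyTransform hφ ht hg]
  · simpa only [neg_sq] using integral_pow_three_eq_of_tendsto hφ hB
      (fun x hx => hsupp x (not_mem x hx)) height_pos height_tendsto hG hlim

end RealBoundaryValue

section FiniteHilbertTransformIdentities

variable {φ : ℝ → ℝ} {B : ℝ}

theorem memLp_two_fht (hφ : Integrable φ) (hB : ∀ x, |φ x| ≤ B)
    (hsupp : ∀ x ∉ Ioo (-1 : ℝ) 1, φ x = 0) : MemLp (fht fun x => (φ x : ℂ)) 2 := by
  obtain ⟨h, hh, hfht, -⟩ := exists_ae_fht_eq_and_integral_pow_three_eq hφ hB hsupp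
  exact (memLp_congr_ae hfht).2 hh.ofReal

theorem integral_pow_three_eq_three_mul_integral_mul_norm_fht_sq (hφ : Integrable φ)
    (hB : ∀ x, |φ x| ≤ B) (hsupp : ∀ x ∉ Ioo (-1 : ℝ) 1, φ x = 0) :
    ∫ t, φ t ^ 3 = 3 * ∫ t, φ t * ‖fht (fun x => (φ x : ℂ)) t‖ ^ 2 := by
  obtain ⟨h, -, hfht, hint⟩ := exists_ae_fht_eq_and_integral_pow_three_eq hφ hB hsupp
  rw [hint]
  congr 1
  refine integral_congr_ae (hfht.mono fun t ht => ?_)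
  simp only [ht, Complex.norm_real, Real.norm_eq_abs, sq_abs]

variable {A : Set ℝ}

theorem eLpNorm_two_restrict_fht_indicator (hA : MeasurableSet A) (hA' : A ⊆ Ioo (-1 : ℝ) 1) :
    eLpNorm (fht (A.indicator fun _ => (1 : ℂ))) 2 (volume.restrict A) =
      ENNReal.ofReal fhtBeta * volume A ^ (1 / 2 : ℝ) := by
  have volume_ne_top : volume A ≠ ∞ := measure_ne_top_of_subset hA' (by simp)
  set χ : ℝ → ℝ := A.indicator fun _ => 1 with hχ
  have ofReal_χ : (A.indicator fun _ => (1 : ℂ)) = fun x => (χ x : ℂ) := by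
    ext x
    by_cases hx : x ∈ A <;> simp [hχ, hx]
  have χ_integrable : Integrable χ :=
    (integrable_indicator_iff hA).2 (integrableOn_const volume_ne_top)
  have χ_bound (x : ℝ) : |χ x| ≤ 1 := by
    by_cases hx : x ∈ A <;> simp [hχ, hx]
  have χ_supp (x : ℝ) (hx : x ∉ Ioo (-1 : ℝ) 1) : χ x = 0 :=
    indicator_of_notMem (fun hxA => hx (hA' hxA)) _
  have identity :=
    integral_pow_three_eq_three_mul_integral_mul_norm_fht_sq χ_integrable χ_bound χ_supp
  have volume_eq : ∫ t, χ t ^ 3 = volume.real A := by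
    rw [← integral_indicator_one hA]
    congr 1 with t
    by_cases ht : t ∈ A <;> simp [hχ, ht]
  have norm_eq : ∫ t in A, ‖fht (fun x => (χ x : ℂ)) t‖ ^ 2 = 1 / 3 * volume.real A := by
    rw [← integral_indicator hA, ← volume_eq, identity, one_div, inv_mul_cancel_left₀ three_ne_zero]
    congr 1 with t
    by_cases ht : t ∈ A <;> simp [hχ, ht]
  rw [ofReal_χ, eLpNorm_two_eq_ofReal_sqrt
    ((memLp_two_fht χ_integrable χ_bound χ_supp).restrict A), norm_eq, fhtBeta_eq_sqrt,
    Real.sqrt_mul (by norm_num), ENNReal.ofReal_mul (Real.sqrt_nonneg _), Real.sqrt_eq_rpow,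
    Real.sqrt_eq_rpow,
    ← ENNReal.ofReal_rpow_of_nonneg measureReal_nonneg (by norm_num),
    ofReal_measureReal volume_ne_top]

end FiniteHilbertTransformIdentities

/-- Lemma 5.1: `‖T(χ_A)‖_{L²} ≥ β·|A|^{1/2}` for every Borel set
`A ⊆ (−1,1)`. -/
theorem stmt17 (A : Set ℝ) (hA : MeasurableSet A) (hA' : A ⊆ Ioo (-1:ℝ) 1) :
    ENNReal.ofReal fhtBeta * volume A ^ (1/2 : ℝ)
      ≤ eLpNorm (fht (A.indicator fun _ => (1:ℂ))) 2 volIoo := by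
  rw [← eLpNorm_two_restrict_fht_indicator hA hA']
  exact eLpNorm_mono_measure _ (Measure.restrict_mono hA' le_rfl)
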